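/- There exists a time T ≥ max{d_h, δ(CS(h),CS(f)) + d_f} such that for all t ≥ T, the set of time-delayed hot spots ℋ(t) = {x ∈ ℝⁿ : u(x,t) = max_{ξ∈ℝⁿ} u(ξ,t)} is contained in CS(h), the convex hull of the support of h. -/

import Mathlib

open Real Set Filter MeasureTheory Metric Pointwise
open scoped Nat Topology

noncomputable section

variable {n : ℕ}

/-- The Laplacian of `v : ℝⁿ → ℝ` at `x`, as the sum of second partial derivatives. -/
def lap (v : EuclideanSpace ℝ (Fin n) → ℝ) (x : EuclideanSpace ℝ (Fin n)) : ℝ :=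
  ∑ i : Fin n, iteratedDeriv 2 (fun a : ℝ => v (x + a • EuclideanSpace.single i (1 : ℝ))) 0

/-- `CS(φ)`: the convex hull of the support of `φ`. -/
def CS (v : EuclideanSpace ℝ (Fin n) → ℝ) : Set (EuclideanSpace ℝ (Fin n)) :=
  convexHull ℝ (tsupport v)

/-- `d_φ`: the diameter of the support of `φ`. -/
def dsupp (v : EuclideanSpace ℝ (Fin n) → ℝ) : ℝ := Metric.diam (tsupport v)

/-- `δ(K,L) = sup_{η ∈ L} dist(η, K)`. -/
def deltaCC (K L : Set (EuclideanSpace ℝ (Fin n))) : ℝ :=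
  sSup ((fun η => Metric.infDist η K) '' L)

/-- The centroid `m_h = (∫ h(y) y dy)/(∫ h(y) dy)`. -/
def centroid (h : EuclideanSpace ℝ (Fin n) → ℝ) : EuclideanSpace ℝ (Fin n) :=
  (∫ y, h y)⁻¹ • ∫ y, h y • y

/-- `T₀(φ) = min{T ≥ 0 : ∀ t ≥ T, t ≥ φ(t) + max{d_h, δ(CS(h),CS(f)) + d_f}}`, `h = f + g`. -/
def T0 (f g : EuclideanSpace ℝ (Fin n) → ℝ) (phi : ℝ → ℝ) : ℝ :=
  sInf {T : ℝ | 0 ≤ T ∧ ∀ t ≥ T,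
    phi t + max (dsupp (f + g)) (deltaCC (CS (f + g)) (CS f) + dsupp f) ≤ t}

/-- Sobolev `W^{ℓ,∞}`-type norm: sum of sup-norms of the iterated derivatives up to order `ℓ`. -/
def sobNorm (ℓ : ℕ) (v : EuclideanSpace ℝ (Fin n) → ℝ) : ℝ :=
  ∑ i ∈ Finset.range (ℓ + 1), ⨆ x, ‖iteratedFDeriv ℝ i v x‖

/-- The `L¹` norm. -/
def L1norm (v : EuclideanSpace ℝ (Fin n) → ℝ) : ℝ := ∫ y, |v y|

/-- The sup norm. -/
def LinfNorm (v : EuclideanSpace ℝ (Fin n) → ℝ) : ℝ := ⨆ x, |v x|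

/-- `𝒞(v)`: the critical points of `v` lying in the interior of its support. -/
def critSet (v : EuclideanSpace ℝ (Fin n) → ℝ) : Set (EuclideanSpace ℝ (Fin n)) :=
  {x | x ∈ interior (tsupport v) ∧ gradient v x = 0}

/-!
On the Fourier side each mode of the damped wave equation is a damped oscillator, whose solution
agrees with `exp (-4π²‖ξ‖²t) (𝓕 f + 𝓕 g)` up to a relative error `O(1/t)` at low frequencies and
an exponentially small error at high ones. After multiplication by `(4πt)^(n/2)`, the solution
therefore differs from the heat integral `H` of `f + g` by `o(1)` uniformly, and by `o(1/t)` in the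
Lipschitz seminorm; finite speed of propagation makes all slices compactly supported.

At a point outside the convex hull with `‖x‖ ≲ √t`, a fixed step along a normal of a separating
hyperplane moves closer to every point of the support and raises `H` by at least a constant times
`1/t`, which beats the Lipschitz error. Farther out, `H` is smaller than at the origin by a fixed
amount. Hence neither point is a maximum.
-/

open scoped InnerProductSpace FourierTransform

/-! ### The damped oscillator -/

theorem le_mul_exp_of_deriv_le {V V' : ℝ → ℝ} {k : ℝ} (hc : ContinuousOn V (Ici 0))
    (hd : ∀ t > 0, HasDerivAt V (V' t) t) (hle : ∀ t > 0, V' t ≤ -k * V t) {t : ℝ} (ht : 0 ≤ t) :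
    V t ≤ V 0 * exp (-k * t) := by
  have hd' : ∀ s ∈ interior (Ici (0 : ℝ)), HasDerivAt (fun s => V s * exp (k * s))
      (V' s * exp (k * s) + V s * (exp (k * s) * k)) s := fun s hs =>
    (hd s (by simpa using hs)).mul (by simpa using ((hasDerivAt_id s).const_mul k).exp)
  have hanti : AntitoneOn (fun s => V s * exp (k * s)) (Ici 0) := by
    refine antitoneOn_of_deriv_nonpos (convex_Ici 0) (hc.mul (by fun_prop))
      (fun s hs => (hd' s hs).differentiableAt.differentiableWithinAt) fun s hs => ?_
    rw [(hd' s hs).deriv]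
    nlinarith [hle s (by simpa using hs), exp_pos (k * s)]
  have hle0 : V t * exp (k * t) ≤ V 0 := by
    simpa using hanti (mem_Ici.2 le_rfl) (mem_Ici.2 ht) ht
  rwa [neg_mul, Real.exp_neg, ← div_eq_mul_inv, le_div_iff₀ (exp_pos _)]

section Oscillator

variable {F : Type*} [NormedAddCommGroup F] [InnerProductSpace ℝ F]

theorem eq_exp_smul_of_hasDerivAt_smul {z : ℝ → F} {r : ℝ} (hc : ContinuousOn z (Ici 0))
    (hd : ∀ t > 0, HasDerivAt z (r • z t) t) {t : ℝ} (ht : 0 ≤ t) :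
    z t = exp (r * t) • z 0 := by
  have hexp (s : ℝ) : HasDerivAt (fun s => exp (r * s) • z 0) (r • exp (r * s) • z 0) s := by
    have h : HasDerivAt (fun s => exp (r * s)) (exp (r * s) * r) s := by
      simpa using ((hasDerivAt_id s).const_mul r).exp
    exact (h.smul_const _).congr_deriv (by module)
  have hle := le_mul_exp_of_deriv_le (V := fun s => ‖z s - exp (r * s) • z 0‖ ^ 2) (k := -(2 * r))
    (by fun_prop) (fun s hs => ((hd s hs).sub (hexp s)).norm_sq)
    (fun s _ => by
      simp only [Pi.sub_apply, ← smul_sub, inner_smul_right, real_inner_self_eq_norm_sq]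
      linarith) ht
  simpa [sub_eq_zero] using hle.antisymm (by simp)

/-- The damped oscillator `y'' + y' + s y = 0` on `[0, ∞)`, written as a first order system for
the position `y` and the velocity `v = y'`. -/
structure IsDampedOscillator (s : ℝ) (y v : ℝ → F) : Prop where
  continuousOn_position : ContinuousOn y (Ici 0)
  continuousOn_velocity : ContinuousOn v (Ici 0)
  hasDerivAt_position : ∀ t > 0, HasDerivAt y (v t) t
  hasDerivAt_velocity : ∀ t > 0, HasDerivAt v (-v t - s • y t) t

theorem norm_add_smul_le_of_le_one {c : ℝ} (hc₀ : 0 ≤ c) (hc₁ : c ≤ 1) (a b : F) :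
    ‖b + c • a‖ ≤ ‖a‖ + ‖b‖ := by
  refine (norm_add_le _ _).trans ?_
  rw [norm_smul, Real.norm_of_nonneg hc₀]
  nlinarith [norm_nonneg a]

theorem abs_exp_root_sub_exp_le {s q t : ℝ} (hq : 0 ≤ q) (hqs : q ^ 2 = 1 - 4 * s) (hs : 0 ≤ s)
    (ht : 0 ≤ t) :
    |exp ((q - 1) / 2 * t) - exp (-s * t)| ≤ exp (-s * t) * (4 * (t * s ^ 2)) := by
  have hsplit : exp ((q - 1) / 2 * t) = exp (-s * t) * exp (((q - 1) / 2 + s) * t) := by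
    rw [← Real.exp_add]; ring_nf
  have hnonpos : (q - 1) / 2 + s ≤ 0 := by nlinarith
  have hle_one : exp (((q - 1) / 2 + s) * t) ≤ 1 :=
    Real.exp_le_one_iff.2 (mul_nonpos_of_nonpos_of_nonneg hnonpos ht)
  rw [hsplit, ← mul_sub_one, abs_mul, abs_of_pos (exp_pos _), abs_sub_comm,
    abs_of_nonneg (by linarith)]
  gcongr
  have hlower : -(4 * s ^ 2) * t ≤ ((q - 1) / 2 + s) * t :=
    mul_le_mul_of_nonneg_right (by nlinarith) ht
  linarith [Real.add_one_le_exp (((q - 1) / 2 + s) * t)]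

namespace IsDampedOscillator

variable {s t q : ℝ} {y v : ℝ → F}

theorem velocity_add_smul_eq (h : IsDampedOscillator s y v) (hqs : q ^ 2 = 1 - 4 * s)
    (ht : 0 ≤ t) :
    v t + ((1 + q) / 2) • y t = exp ((q - 1) / 2 * t) • (v 0 + ((1 + q) / 2) • y 0) := by
  refine eq_exp_smul_of_hasDerivAt_smul (z := fun t => v t + ((1 + q) / 2) • y t)
    (h.continuousOn_velocity.add (h.continuousOn_position.const_smul _)) (fun t ht => ?_) ht
  refine ((h.hasDerivAt_velocity t ht).add
    ((h.hasDerivAt_position t ht).const_smul ((1 + q) / 2))).congr_deriv ?_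
  obtain rfl : s = (1 - q ^ 2) / 4 := by linarith
  module

theorem smul_sub_exp_smul_eq (h : IsDampedOscillator s y v) (hqs : q ^ 2 = 1 - 4 * s)
    (ht : 0 ≤ t) :
    q • (y t - exp (-s * t) • (y 0 + v 0)) =
      (exp ((q - 1) / 2 * t) - exp (-s * t)) • (v 0 + ((1 + q) / 2) • y 0)
        + (exp (-s * t) * (1 - q)) • (v 0 + (1 / 2 : ℝ) • y 0)
        - exp (-(1 + q) / 2 * t) • (v 0 + ((1 - q) / 2) • y 0) := by
  have hplus := h.velocity_add_smul_eq hqs ht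
  have hminus := h.velocity_add_smul_eq (q := -q) (by rwa [neg_sq]) ht
  rw [show (-q - 1) / 2 * t = -(1 + q) / 2 * t by ring] at hminus
  linear_combination (norm := module) hplus - hminus

theorem norm_sub_exp_smul_le_of_small (h : IsDampedOscillator s y v) (hs : 0 ≤ s)
    (hs' : s ≤ 3 / 16) (ht : 0 ≤ t) :
    ‖y t - exp (-s * t) • (y 0 + v 0)‖ ≤
      8 * (‖y 0‖ + ‖v 0‖) * (exp (-s * t) * (s + t * s ^ 2) + exp (-(1 / 8) * t)) := by
  have hq := Real.sqrt_nonneg (1 - 4 * s)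
  have hqs : √(1 - 4 * s) ^ 2 = 1 - 4 * s := Real.sq_sqrt (by linarith)
  set q := √(1 - 4 * s)
  set M := ‖y 0‖ + ‖v 0‖
  have hM : 0 ≤ M := by positivity
  have hq_le : q ≤ 1 := by nlinarith
  have hq_ge : 1 / 2 ≤ q := by nlinarith
  have hq_sub : 1 - q ≤ 4 * s := by nlinarith
  have hslow : ‖(exp ((q - 1) / 2 * t) - exp (-s * t)) • (v 0 + ((1 + q) / 2) • y 0)‖
      ≤ exp (-s * t) * (4 * (t * s ^ 2)) * M := by
    rw [norm_smul]
    gcongr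
    · exact abs_exp_root_sub_exp_le hq hqs hs ht
    · exact norm_add_smul_le_of_le_one (by linarith) (by linarith) _ _
  have hfactor : ‖(exp (-s * t) * (1 - q)) • (v 0 + (1 / 2 : ℝ) • y 0)‖
      ≤ exp (-s * t) * (4 * s) * M := by
    rw [norm_smul, Real.norm_of_nonneg (mul_nonneg (exp_pos _).le (by linarith))]
    gcongr
    exact norm_add_smul_le_of_le_one (by norm_num) (by norm_num) _ _
  have hfast : ‖exp (-(1 + q) / 2 * t) • (v 0 + ((1 - q) / 2) • y 0)‖
      ≤ exp (-(1 / 8) * t) * M := by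
    rw [norm_smul, Real.norm_of_nonneg (exp_pos _).le]
    gcongr
    · nlinarith
    · exact norm_add_smul_le_of_le_one (by linarith) (by linarith) _ _
  have hsum : q * ‖y t - exp (-s * t) • (y 0 + v 0)‖ ≤ exp (-s * t) * (4 * (t * s ^ 2)) * M
      + exp (-s * t) * (4 * s) * M + exp (-(1 / 8) * t) * M := by
    rw [← Real.norm_of_nonneg hq, ← norm_smul, h.smul_sub_exp_smul_eq hqs ht]
    exact (norm_sub_le _ _).trans
      (add_le_add ((norm_add_le _ _).trans (add_le_add hslow hfactor)) hfast)
  nlinarith [mul_le_mul_of_nonneg_right hq_ge (norm_nonneg (y t - exp (-s * t) • (y 0 + v 0))),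
    mul_nonneg hM (exp_pos (-(1 / 8) * t)).le]

theorem energy_le (h : IsDampedOscillator s y v) (hs : 3 / 16 ≤ s) (ht : 0 ≤ t) :
    ‖v t‖ ^ 2 + 1 / 2 * ⟪y t, v t⟫_ℝ + s * ‖y t‖ ^ 2 ≤
      (‖v 0‖ ^ 2 + 1 / 2 * ⟪y 0, v 0⟫_ℝ + s * ‖y 0‖ ^ 2) * exp (-(1 / 4) * t) := by
  have hy := h.continuousOn_position
  have hv := h.continuousOn_velocity
  refine le_mul_exp_of_deriv_le
    (V := fun t => ‖v t‖ ^ 2 + 1 / 2 * ⟪y t, v t⟫_ℝ + s * ‖y t‖ ^ 2) (by fun_prop)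
    (fun t ht => ((h.hasDerivAt_velocity t ht).norm_sq.add
      (((h.hasDerivAt_position t ht).inner ℝ (h.hasDerivAt_velocity t ht)).const_mul (1 / 2))).add
      ((h.hasDerivAt_position t ht).norm_sq.const_mul s)) (fun t _ => ?_) ht
  have hsq : 0 ≤ ‖v t‖ ^ 2 + 2 * (⟪y t, v t⟫_ℝ * (3 / 20)) + (‖y t‖ * (3 / 20)) ^ 2 := by
    have := sq_nonneg ‖v t + (3 / 20 : ℝ) • y t‖
    rw [norm_add_sq_real, inner_smul_right, norm_smul, real_inner_comm] at this
    norm_num at this ⊢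
    linarith
  simp only [inner_sub_right, inner_neg_right, inner_smul_right, real_inner_self_eq_norm_sq,
    real_inner_comm (y t) (v t)]
  nlinarith [mul_nonneg (sub_nonneg.2 hs) (sq_nonneg ‖y t‖)]

theorem norm_le_of_large (h : IsDampedOscillator s y v) (hs : 3 / 16 ≤ s) (ht : 0 ≤ t) :
    ‖y t‖ ≤ 4 * (‖y 0‖ + ‖v 0‖) * exp (-(1 / 8) * t) := by
  set M := ‖y 0‖ + ‖v 0‖
  have hexp : exp (-(1 / 4) * t) = exp (-(1 / 8) * t) ^ 2 := by
    rw [← Real.exp_nat_mul]; congr 1; push_cast; ring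
  have hinit : ‖v 0‖ ^ 2 + 1 / 2 * ⟪y 0, v 0⟫_ℝ + s * ‖y 0‖ ^ 2 ≤ s * (2 / 3) * (4 * M) ^ 2 := by
    have hvM : ‖v 0‖ ^ 2 ≤ M ^ 2 := by gcongr; exact le_add_of_nonneg_left (norm_nonneg _)
    have hyM : s * ‖y 0‖ ^ 2 ≤ s * M ^ 2 := by gcongr; exact le_add_of_nonneg_right (norm_nonneg _)
    have hyv : ⟪y 0, v 0⟫_ℝ ≤ M ^ 2 := by
      refine (real_inner_le_norm _ _).trans ?_
      rw [sq]
      gcongr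
      exacts [le_add_of_nonneg_right (norm_nonneg _), le_add_of_nonneg_left (norm_nonneg _)]
    nlinarith [mul_le_mul_of_nonneg_right hs (sq_nonneg M)]
  have hlower : s * (2 / 3) * ‖y t‖ ^ 2 ≤ ‖v t‖ ^ 2 + 1 / 2 * ⟪y t, v t⟫_ℝ + s * ‖y t‖ ^ 2 := by
    have := neg_le_of_abs_le (abs_real_inner_le_norm (y t) (v t))
    nlinarith [sq_nonneg (‖v t‖ - ‖y t‖ / 4), mul_nonneg (sub_nonneg.2 hs) (sq_nonneg ‖y t‖)]
  refine abs_le_of_sq_le_sq' ?_ (by positivity) |>.2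
  refine le_of_mul_le_mul_left (a := s * (2 / 3)) ?_ (by linarith)
  refine hlower.trans ((h.energy_le hs ht).trans ?_)
  rw [hexp, mul_pow _ (exp _), ← mul_assoc]
  gcongr

theorem norm_sub_exp_smul_le (h : IsDampedOscillator s y v) (hs : 0 ≤ s) (ht : 0 ≤ t) :
    ‖y t - exp (-s * t) • (y 0 + v 0)‖ ≤
      8 * (‖y 0‖ + ‖v 0‖) * (exp (-s * t) * (s + t * s ^ 2) + exp (-(1 / 8) * t)) := by
  rcases le_total s (3 / 16) with hs' | hs'
  · exact h.norm_sub_exp_smul_le_of_small hs hs' ht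
  have hexp : exp (-s * t) ≤ exp (-(1 / 8) * t) := by gcongr; linarith
  have hM : 0 ≤ ‖y 0‖ + ‖v 0‖ := by positivity
  calc ‖y t - exp (-s * t) • (y 0 + v 0)‖
      ≤ ‖y t‖ + exp (-s * t) * ‖y 0 + v 0‖ := by
        refine (norm_sub_le _ _).trans_eq ?_
        rw [norm_smul, Real.norm_of_nonneg (exp_pos _).le]
    _ ≤ 4 * (‖y 0‖ + ‖v 0‖) * exp (-(1 / 8) * t) + exp (-(1 / 8) * t) * (‖y 0‖ + ‖v 0‖) := by
        gcongr
        exacts [h.norm_le_of_large hs' ht, norm_add_le _ _]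
    _ ≤ 8 * (‖y 0‖ + ‖v 0‖) * exp (-(1 / 8) * t) := by
        nlinarith [mul_nonneg hM (exp_pos (-(1 / 8) * t)).le]
    _ ≤ _ := by gcongr; exact le_add_of_nonneg_left (by positivity)

end IsDampedOscillator

end Oscillator

/-! ### Integrals depending on a time parameter, and derivatives along lines -/

theorem continuous_slice_of_continuousOn {E X : Type*} [TopologicalSpace E] [TopologicalSpace X]
    {F : E × ℝ → X} {I : Set ℝ} {t : ℝ} (hF : ContinuousOn F (univ ×ˢ I)) (ht : t ∈ I) :
    Continuous fun x => F (x, t) :=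
  continuousOn_univ.1 (hF.comp (by fun_prop) fun x _ => ⟨mem_univ x, ht⟩)

theorem deriv_slice_eq_zero_of_isOpen {E G : Type*} [NormedAddCommGroup G] [NormedSpace ℝ G]
    {F F' : E × ℝ → G} {K : Set E} {I : Set ℝ} (hI : IsOpen I)
    (hd : ∀ x, ∀ t ∈ I, HasDerivAt (fun s => F (x, s)) (F' (x, t)) t)
    (hz : ∀ x ∉ K, ∀ t ∈ I, F (x, t) = 0) : ∀ x ∉ K, ∀ t ∈ I, F' (x, t) = 0 := fun x hx t ht =>
  (hd x t ht).unique ((hasDerivAt_const t (0 : G)).congr_of_eventuallyEq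
    (by filter_upwards [hI.mem_nhds ht] with s hs using hz x hx s hs))

section Parameter

variable {E G : Type*} [NormedAddCommGroup E] [MeasurableSpace E] [BorelSpace E]
  {μ : Measure E} [IsFiniteMeasureOnCompacts μ] [NormedAddCommGroup G]
  {F F' : E × ℝ → G} {K : Set E} {I : Set ℝ} {t₀ : ℝ}

theorem integrable_slice_of_isCompact (hK : IsCompact K) (hF : ContinuousOn F (univ ×ˢ I))
    (hz : ∀ x ∉ K, ∀ t ∈ I, F (x, t) = 0) (ht₀ : t₀ ∈ I) : Integrable (fun x => F (x, t₀)) μ :=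
  (continuous_slice_of_continuousOn hF ht₀).integrable_of_hasCompactSupport
    (HasCompactSupport.intro hK fun x hx => hz x hx t₀ ht₀)

variable [NormedSpace ℝ G]

theorem continuousOn_integral_slice_of_isCompact (hK : IsCompact K)
    (hF : ContinuousOn F (univ ×ˢ I)) (hz : ∀ x ∉ K, ∀ t ∈ I, F (x, t) = 0) :
    ContinuousOn (fun t => ∫ x, F (x, t) ∂μ) I :=
  continuousOn_integral_of_compact_support hK
    (hF.comp (f := Prod.swap) (by fun_prop) fun _ hp => ⟨mem_univ _, hp.1⟩)
    fun t x ht hx => hz x hx t ht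

theorem hasDerivAt_integral_slice_of_isCompact (hK : IsCompact K) (hI : IsOpen I)
    (hF : ContinuousOn F (univ ×ˢ I)) (hF' : ContinuousOn F' (univ ×ˢ I))
    (hd : ∀ x, ∀ t ∈ I, HasDerivAt (fun s => F (x, s)) (F' (x, t)) t)
    (hz : ∀ x ∉ K, ∀ t ∈ I, F (x, t) = 0) (ht₀ : t₀ ∈ I) :
    HasDerivAt (fun t => ∫ x, F (x, t) ∂μ) (∫ x, F' (x, t₀) ∂μ) t₀ := by
  have hz' := deriv_slice_eq_zero_of_isOpen hI hd hz
  obtain ⟨ε, hε, hεI⟩ := Metric.nhds_basis_closedBall.mem_iff.1 (hI.mem_nhds ht₀)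
  obtain ⟨C, hC⟩ := (hK.prod (isCompact_closedBall t₀ ε)).exists_bound_of_continuousOn
    (hF'.mono (prod_mono (subset_univ K) hεI))
  refine (hasDerivAt_integral_of_dominated_loc_of_deriv_le (F' := fun t x => F' (x, t))
    (bound := K.indicator fun _ => C) (Metric.closedBall_mem_nhds t₀ hε) ?_
    (integrable_slice_of_isCompact hK hF hz ht₀)
    (integrable_slice_of_isCompact hK hF' hz' ht₀).aestronglyMeasurable
    (Eventually.of_forall fun x t ht => ?_)
    ((integrableOn_const hK.measure_lt_top.ne).integrable_indicator hK.measurableSet)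
    (Eventually.of_forall fun x t ht => hd x t (hεI ht))).2
  · filter_upwards [hI.mem_nhds ht₀] with t ht
      using (integrable_slice_of_isCompact hK hF hz ht).aestronglyMeasurable
  · by_cases hx : x ∈ K
    · rw [indicator_of_mem hx]
      exact hC (x, t) ⟨hx, ht⟩
    · rw [indicator_of_notMem hx, hz' x hx t (hεI ht), norm_zero]

end Parameter

theorem integral_eq_zero_of_hasLineDerivAt {E G : Type*} [NormedAddCommGroup E] [NormedSpace ℝ E]
    [FiniteDimensional ℝ E] [MeasurableSpace E] [BorelSpace E] {μ : Measure E}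
    [μ.IsAddHaarMeasure] [NormedAddCommGroup G] [NormedSpace ℝ G] {w w' : E → G} {v : E}
    (hw : Integrable w μ) (hw' : Integrable w' μ)
    (hd : ∀ x, HasLineDerivAt ℝ w (w' x) x v) : ∫ x, w' x ∂μ = 0 := by
  simpa using integral_bilinear_hasLineDerivAt_right_eq_neg_left_of_integrable (μ := μ) (v := v)
    (f := fun _ : E => (1 : ℝ)) (f' := fun _ => 0) (B := ContinuousLinearMap.lsmul ℝ ℝ)
    (by simp) (by simpa using hw') (by simpa using hw)
    (fun x _ => by simp [HasLineDerivAt, hasDerivAt_const]) (fun x _ => hd x)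

theorem lineDeriv_eq_zero_of_isOpen {E G : Type*} [NormedAddCommGroup E] [NormedSpace ℝ E]
    [NormedAddCommGroup G] [NormedSpace ℝ G] {w w' : E → G} {v : E} {s : Set E} (hs : IsOpen s)
    (hd : ∀ x, HasLineDerivAt ℝ w (w' x) x v) (hz : ∀ x ∈ s, w x = 0) : ∀ x ∈ s, w' x = 0 := by
  intro x hx
  have hnear : w =ᶠ[𝓝 x] fun _ => 0 := by
    filter_upwards [hs.mem_nhds hx] with y hy using hz y hy
  exact (hd x).unique (HasLineDerivAt.congr_of_eventuallyEq
    ((hasFDerivAt_const (𝕜 := ℝ) (0 : G) x).hasLineDerivAt v) hnear)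

theorem integrable_and_integral_eq_zero_of_hasLineDerivAt {E G : Type*} [NormedAddCommGroup E]
    [NormedSpace ℝ E] [FiniteDimensional ℝ E] [MeasurableSpace E] [BorelSpace E] {μ : Measure E}
    [μ.IsAddHaarMeasure] [NormedAddCommGroup G] [NormedSpace ℝ G] {w w' : E → G} {v : E}
    {K : Set E} (hK : IsCompact K) (hw : Continuous w) (hw' : Continuous w')
    (hd : ∀ x, HasLineDerivAt ℝ w (w' x) x v) (hz : ∀ x ∉ K, w x = 0) :
    Integrable w' μ ∧ ∫ x, w' x ∂μ = 0 := by
  have hint' := hw'.integrable_of_hasCompactSupport (μ := μ) (HasCompactSupport.intro hK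
    (lineDeriv_eq_zero_of_isOpen hK.isClosed.isOpen_compl hd hz))
  exact ⟨hint', integral_eq_zero_of_hasLineDerivAt
    (hw.integrable_of_hasCompactSupport (HasCompactSupport.intro hK hz)) hint' hd⟩

theorem hasLineDerivAt_fourierChar_neg_inner {E : Type*} [NormedAddCommGroup E]
    [InnerProductSpace ℝ E] (ξ x v : E) :
    HasLineDerivAt ℝ (fun y => (𝐞 (-⟪y, ξ⟫_ℝ) : ℂ))
      (-(2 * π * Complex.I * ⟪v, ξ⟫_ℝ) * 𝐞 (-⟪x, ξ⟫_ℝ)) x v := by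
  have hinner : HasDerivAt (fun a : ℝ => -⟪x + a • v, ξ⟫_ℝ) (-⟪v, ξ⟫_ℝ) 0 := by
    have hline : HasDerivAt (fun a : ℝ => x + a • v) v 0 := by
      simpa using ((hasDerivAt_id (0 : ℝ)).smul_const v).const_add x
    exact (hline.inner ℝ (hasDerivAt_const (0 : ℝ) ξ)).neg.congr_deriv (by simp)
  refine (HasDerivAt.scomp_of_eq (0 : ℝ) (Real.hasDerivAt_fourierChar (-⟪x, ξ⟫_ℝ)) hinner
    (by simp)).congr_deriv ?_
  rw [Complex.real_smul]
  push_cast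
  ring

theorem continuousOn_fourierChar_smul {E G : Type*} [NormedAddCommGroup E]
    [InnerProductSpace ℝ E] [NormedAddCommGroup G] [NormedSpace ℂ G] {F : E × ℝ → G} {I : Set ℝ}
    (hF : ContinuousOn F (univ ×ˢ I)) (ξ : E) :
    ContinuousOn (fun p : E × ℝ => 𝐞 (-⟪p.1, ξ⟫_ℝ) • F p) (univ ×ˢ I) :=
  (Real.continuous_fourierChar.comp (by fun_prop)).continuousOn.smul hF

section Fourier

variable {E G : Type*} [NormedAddCommGroup E] [InnerProductSpace ℝ E] [FiniteDimensional ℝ E]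
  [MeasurableSpace E] [BorelSpace E] [NormedAddCommGroup G] [NormedSpace ℂ G]

theorem fourier_of_hasLineDerivAt {w w' : E → G} {v : E} (hw : Integrable w)
    (hw' : Integrable w') (hd : ∀ x, HasLineDerivAt ℝ w (w' x) x v) (ξ : E) :
    𝓕 w' ξ = (2 * π * Complex.I * ⟪v, ξ⟫_ℝ) • 𝓕 w ξ := by
  have hint : Integrable fun x => (𝐞 (-⟪x, ξ⟫_ℝ) : ℂ) • w x :=
    (Real.fourierIntegral_convergent_iff ξ).2 hw
  have hint' : Integrable fun x => (𝐞 (-⟪x, ξ⟫_ℝ) : ℂ) • w' x :=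
    (Real.fourierIntegral_convergent_iff ξ).2 hw'
  have hparts := integral_bilinear_hasLineDerivAt_right_eq_neg_left_of_integrable (μ := volume)
    (v := v) (f := fun x => (𝐞 (-⟪x, ξ⟫_ℝ) : ℂ)) (g := w) (g' := w')
    (B := ContinuousLinearMap.lsmul ℝ ℂ)
    (by simpa only [ContinuousLinearMap.lsmul_apply, mul_smul] using!
      hint.smul (-(2 * π * Complex.I * ⟪v, ξ⟫_ℝ))) hint' hint
    (fun x _ => hasLineDerivAt_fourierChar_neg_inner ξ x v) (fun x _ => hd x)
  simp only [ContinuousLinearMap.lsmul_apply, mul_smul, neg_smul, integral_neg, neg_neg] at hparts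
  simp only [Real.fourier_eq, Circle.smul_def, hparts, integral_smul]
  simp only [mul_smul]

theorem fourier_of_hasLineDerivAt_of_hasLineDerivAt {w w' w'' : E → G} {v : E} (hw : Integrable w)
    (hw' : Integrable w') (hw'' : Integrable w'') (hd : ∀ x, HasLineDerivAt ℝ w (w' x) x v)
    (hd' : ∀ x, HasLineDerivAt ℝ w' (w'' x) x v) (ξ : E) :
    𝓕 w'' ξ = (-(4 * π ^ 2 * ⟪v, ξ⟫_ℝ ^ 2) : ℂ) • 𝓕 w ξ := by
  rw [fourier_of_hasLineDerivAt hw' hw'' hd', fourier_of_hasLineDerivAt hw hw' hd, smul_smul]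
  congr 1
  linear_combination (4 * π ^ 2 * (⟪v, ξ⟫_ℝ : ℂ) ^ 2) * Complex.I_sq

variable {F F' : E × ℝ → G} {K : Set E} {I : Set ℝ} {t₀ : ℝ}

theorem continuousOn_fourier_slice_of_isCompact (hK : IsCompact K)
    (hF : ContinuousOn F (univ ×ˢ I)) (hz : ∀ x ∉ K, ∀ t ∈ I, F (x, t) = 0) (ξ : E) :
    ContinuousOn (fun t => 𝓕 (fun x => F (x, t)) ξ) I :=
  continuousOn_integral_slice_of_isCompact hK (continuousOn_fourierChar_smul hF ξ)
    fun x hx t ht => by simp [hz x hx t ht]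

theorem hasDerivAt_fourier_slice_of_isCompact (hK : IsCompact K) (hI : IsOpen I)
    (hF : ContinuousOn F (univ ×ˢ I)) (hF' : ContinuousOn F' (univ ×ˢ I))
    (hd : ∀ x, ∀ t ∈ I, HasDerivAt (fun s => F (x, s)) (F' (x, t)) t)
    (hz : ∀ x ∉ K, ∀ t ∈ I, F (x, t) = 0) (ht₀ : t₀ ∈ I) (ξ : E) :
    HasDerivAt (fun t => 𝓕 (fun x => F (x, t)) ξ) (𝓕 (fun x => F' (x, t₀)) ξ) t₀ :=
  hasDerivAt_integral_slice_of_isCompact hK hI (continuousOn_fourierChar_smul hF ξ)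
    (continuousOn_fourierChar_smul hF' ξ) (fun x t ht => (hd x t ht).const_smul (𝐞 (-⟪x, ξ⟫_ℝ)))
    (fun x hx t ht => by simp [hz x hx t ht]) ht₀

end Fourier

/-! ### Classical solutions of the damped wave equation -/

section SpaceTime

variable {E G : Type*} [NormedAddCommGroup E] [NormedSpace ℝ E] [NormedAddCommGroup G]
  [NormedSpace ℝ G]

theorem hasDerivAt_time_of_hasFDerivAt {w : E × ℝ → G} {w' : E × ℝ →L[ℝ] G} {x : E} {t : ℝ}
    (h : HasFDerivAt w w' (x, t)) : HasDerivAt (fun s => w (x, s)) (w' (0, 1)) t :=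
  h.comp_hasDerivAt t ((hasDerivAt_const t x).prodMk (hasDerivAt_id t))

theorem hasDerivAt_space_of_hasFDerivAt {w : E × ℝ → G} {w' : E × ℝ →L[ℝ] G} {x v : E}
    {t a : ℝ} (h : HasFDerivAt w w' (x + a • v, t)) :
    HasDerivAt (fun a : ℝ => w (x + a • v, t)) (w' (v, 0)) a := by
  have hline : HasDerivAt (fun a : ℝ => (x + a • v, t)) (v, (0 : ℝ)) a := by
    simpa using (((hasDerivAt_id a).smul_const v).const_add x).prodMk (hasDerivAt_const a t)
  exact h.comp_hasDerivAt a hline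

theorem hasFDerivAt_clm_apply_const {w : E → G →L[ℝ] ℝ} {w' : E →L[ℝ] G →L[ℝ] ℝ} {p : E}
    (h : HasFDerivAt w w' p) (c : G) : HasFDerivAt (fun q => w q c) (w'.flip c) p := by
  simpa using h.clm_apply (hasFDerivAt_const c p)

variable {u : E × ℝ → ℝ} {u' : E × ℝ → E × ℝ →L[ℝ] ℝ}
  {u'' : E × ℝ → E × ℝ →L[ℝ] E × ℝ →L[ℝ] ℝ}

theorem deriv_deriv_time_eq (hu : ∀ x, ∀ t > 0, HasFDerivAt u (u' (x, t)) (x, t))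
    (hu' : ∀ x, ∀ t > 0, HasFDerivAt u' (u'' (x, t)) (x, t)) (x : E) {t : ℝ} (ht : 0 < t) :
    deriv (deriv fun s => u (x, s)) t = u'' (x, t) (0, 1) (0, 1) := by
  have hderiv : deriv (fun s => u (x, s)) =ᶠ[𝓝 t] fun s => u' (x, s) (0, 1) := by
    filter_upwards [Ioi_mem_nhds ht] with s hs
      using (hasDerivAt_time_of_hasFDerivAt (hu x s hs)).deriv
  rw [hderiv.deriv_eq]
  exact (hasDerivAt_time_of_hasFDerivAt
    (hasFDerivAt_clm_apply_const (hu' x t ht) ((0, 1) : E × ℝ))).deriv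

theorem iteratedDeriv_two_space_eq (hu : ∀ x, ∀ t > 0, HasFDerivAt u (u' (x, t)) (x, t))
    (hu' : ∀ x, ∀ t > 0, HasFDerivAt u' (u'' (x, t)) (x, t)) (x v : E) {t : ℝ} (ht : 0 < t) :
    iteratedDeriv 2 (fun a : ℝ => u (x + a • v, t)) 0 = u'' (x, t) (v, 0) (v, 0) := by
  have hderiv : deriv (fun a : ℝ => u (x + a • v, t)) = fun a => u' (x + a • v, t) (v, 0) :=
    funext fun a => (hasDerivAt_space_of_hasFDerivAt (hu _ t ht)).deriv
  rw [iteratedDeriv_succ, iteratedDeriv_one, hderiv]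
  simpa using (hasDerivAt_space_of_hasFDerivAt (a := 0)
    (hasFDerivAt_clm_apply_const (hu' (x + (0 : ℝ) • v) t ht) ((v, 0) : E × ℝ))).deriv

end SpaceTime

section DampedWave

variable {E ι : Type*} [NormedAddCommGroup E] [InnerProductSpace ℝ E] [Fintype ι]

/-- `u' : E × ℝ → (E × ℝ →L[ℝ] ℝ)` and `u''` are the first and second total derivatives of a
classical solution `u` of the damped wave equation `∂²u/∂t² - Δu + ∂u/∂t = 0` on `E × (0, ∞)` with
initial data `(f, g)`, the Laplacian being computed in the orthonormal basis `b`. The first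
derivative extends continuously to `t = 0`; there only its restriction to the two factors of
`E × ℝ` is prescribed, because `u` is not assumed to be defined in a sensible way for `t < 0`. -/
structure IsDampedWave (b : OrthonormalBasis ι ℝ E) (f g : E → ℝ) (u : E × ℝ → ℝ)
    (u' : E × ℝ → E × ℝ →L[ℝ] ℝ) (u'' : E × ℝ → E × ℝ →L[ℝ] E × ℝ →L[ℝ] ℝ) : Prop where
  continuousOn : ContinuousOn u (univ ×ˢ Ici 0)
  continuousOn_deriv : ContinuousOn u' (univ ×ˢ Ici 0)
  continuousOn_deriv₂ : ContinuousOn u'' (univ ×ˢ Ioi 0)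
  hasFDerivAt : ∀ x, ∀ t > 0, HasFDerivAt u (u' (x, t)) (x, t)
  hasFDerivAt_deriv : ∀ x, ∀ t > 0, HasFDerivAt u' (u'' (x, t)) (x, t)
  pde : ∀ x, ∀ t > 0,
    u'' (x, t) (0, 1) (0, 1) - ∑ i, u'' (x, t) (b i, 0) (b i, 0) + u' (x, t) (0, 1) = 0
  init : ∀ x, u (x, 0) = f x
  init_time : ∀ x, u' (x, 0) (0, 1) = g x
  init_space : ∀ x, HasFDerivAt f (u' (x, 0) ∘L .inl ℝ E ℝ) x

variable {b : OrthonormalBasis ι ℝ E} {f g : E → ℝ} {u : E × ℝ → ℝ}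

theorem exists_isDampedWave (hreg : ContDiffOn ℝ 2 u (univ ×ˢ Ici 0))
    (hpde : ∀ x, ∀ t > 0, deriv (deriv fun s => u (x, s)) t
      - ∑ i, iteratedDeriv 2 (fun a : ℝ => u (x + a • b i, t)) 0 + deriv (fun s => u (x, s)) t = 0)
    (hu0 : ∀ x, u (x, 0) = f x) (hu1 : ∀ x, derivWithin (fun s => u (x, s)) (Ici 0) 0 = g x) :
    ∃ u' u'', IsDampedWave b f g u u' u'' := by
  set S : Set (E × ℝ) := univ ×ˢ Ici 0
  have hSu : UniqueDiffOn ℝ S := uniqueDiffOn_univ.prod (uniqueDiffOn_Ici 0)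
  have hS (x : E) {t : ℝ} (ht : 0 < t) : S ∈ 𝓝 (x, t) := prod_mem_nhds univ_mem (Ici_mem_nhds ht)
  set u' := fderivWithin ℝ u S
  have hreg' : ContDiffOn ℝ 1 u' S := hreg.fderivWithin hSu (by norm_num)
  have hwithin (p) (hp : p ∈ S) : HasFDerivWithinAt u (u' p) S p :=
    (hreg.differentiableOn (by norm_num) p hp).hasFDerivWithinAt
  have hu (x) (t) (ht : 0 < t) : HasFDerivAt u (u' (x, t)) (x, t) :=
    (hwithin _ (mem_of_mem_nhds (hS x ht))).hasFDerivAt (hS x ht)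
  have hu' (x) (t) (ht : 0 < t) : HasFDerivAt u' (fderiv ℝ u' (x, t)) (x, t) :=
    ((hreg'.contDiffAt (hS x ht)).differentiableAt (by norm_num)).hasFDerivAt
  refine ⟨u', fderiv ℝ u', hreg.continuousOn, hreg'.continuousOn, ?_, hu, hu', fun x t ht => ?_,
    hu0, fun x => ?_, fun x => ?_⟩
  · exact (hreg'.mono (prod_mono subset_rfl Ioi_subset_Ici_self)).continuousOn_fderiv_of_isOpen
      (isOpen_univ.prod isOpen_Ioi) le_rfl
  · simpa only [deriv_deriv_time_eq hu hu' x ht, iteratedDeriv_two_space_eq hu hu' x _ ht,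
      (hasDerivAt_time_of_hasFDerivAt (hu x t ht)).deriv] using hpde x t ht
  · have hline : HasDerivWithinAt (fun s : ℝ => (x, s)) (0, 1) (Ici 0) 0 :=
      ((hasDerivAt_const 0 x).prodMk (hasDerivAt_id 0)).hasDerivWithinAt
    rw [← hu1 x]
    exact (((hwithin (x, 0) ⟨mem_univ _, self_mem_Ici⟩).comp_hasDerivWithinAt 0 hline
      fun s hs => ⟨mem_univ _, hs⟩).derivWithin (uniqueDiffOn_Ici 0 0 self_mem_Ici)).symm
  · have hinl : HasFDerivWithinAt (fun z : E => (z, (0 : ℝ))) (.inl ℝ E ℝ) univ x :=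
      ((hasFDerivAt_id x).prodMk (hasFDerivAt_const (0 : ℝ) x)).hasFDerivWithinAt
    have hcomp := HasFDerivWithinAt.comp x (hwithin (x, 0) ⟨mem_univ _, self_mem_Ici⟩) hinl
      fun s _ => (⟨mem_univ _, self_mem_Ici⟩ : (s, (0 : ℝ)) ∈ S)
    exact (hasFDerivWithinAt_univ.1 hcomp).congr_of_eventuallyEq
      (Eventually.of_forall fun z => (hu0 z).symm)

namespace IsDampedWave

variable {u' : E × ℝ → E × ℝ →L[ℝ] ℝ} {u'' : E × ℝ → E × ℝ →L[ℝ] E × ℝ →L[ℝ] ℝ} {t : ℝ}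

theorem deriv₂_symm (h : IsDampedWave b f g u u' u'') (x : E) (ht : 0 < t) (c d : E × ℝ) :
    u'' (x, t) c d = u'' (x, t) d c := by
  refine second_derivative_symmetric_of_eventually (f := u) (f' := u') ?_
    (h.hasFDerivAt_deriv x t ht) c d
  filter_upwards [prod_mem_nhds univ_mem (Ioi_mem_nhds ht)] with p hp
    using h.hasFDerivAt p.1 p.2 hp.2

theorem hasFDerivAt_deriv_apply (h : IsDampedWave b f g u u' u'') (x : E) (ht : 0 < t)
    (c : E × ℝ) : HasFDerivAt (fun p => u' p c) ((u'' (x, t)).flip c) (x, t) :=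
  hasFDerivAt_clm_apply_const (h.hasFDerivAt_deriv x t ht) c

theorem hasLineDerivAt (h : IsDampedWave b f g u u' u'') (x v : E) (ht : 0 < t) :
    HasLineDerivAt ℝ (fun x => u (x, t)) (u' (x, t) (v, 0)) x v :=
  hasDerivAt_space_of_hasFDerivAt (by simpa using h.hasFDerivAt x t ht)

theorem hasLineDerivAt_deriv (h : IsDampedWave b f g u u' u'') (x v : E) (ht : 0 < t)
    (c : E × ℝ) : HasLineDerivAt ℝ (fun x => u' (x, t) c) (u'' (x, t) (v, 0) c) x v :=
  hasDerivAt_space_of_hasFDerivAt (w := fun p => u' p c) (w' := (u'' (x, t)).flip c)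
    (by simpa using h.hasFDerivAt_deriv_apply x ht c)

theorem continuousOn_deriv_apply (h : IsDampedWave b f g u u' u'') (c : E × ℝ) :
    ContinuousOn (fun p => u' p c) (univ ×ˢ Ici 0) :=
  h.continuousOn_deriv.clm_apply continuousOn_const

theorem continuousOn_deriv₂_apply (h : IsDampedWave b f g u u' u'') (c d : E × ℝ) :
    ContinuousOn (fun p => u'' p c d) (univ ×ˢ Ioi 0) :=
  (h.continuousOn_deriv₂.clm_apply continuousOn_const).clm_apply continuousOn_const

end IsDampedWave

end DampedWave

/-! ### Energy estimate and finite speed of propagation -/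

theorem mul_sum_mul_le_mul_energy {ι : Type*} [Fintype ι] {r p : ℝ} {d q : ι → ℝ} (hr : 0 ≤ r)
    (hd : ∑ i, d i ^ 2 ≤ r ^ 2) : p * ∑ i, d i * q i ≤ r * ((p ^ 2 + ∑ i, q i ^ 2) / 2) := by
  set A := ∑ i, d i * q i
  set B := ∑ i, q i ^ 2
  have hB : 0 ≤ B := by positivity
  have hA : |A| ≤ r * √B := by
    refine abs_le_of_sq_le_sq ?_ (by positivity)
    rw [mul_pow, Real.sq_sqrt hB]
    exact (Finset.sum_mul_sq_le_sq_mul_sq _ _ _).trans (by gcongr)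
  calc p * A ≤ |p| * |A| := by rw [← abs_mul]; exact le_abs_self _
    _ ≤ |p| * (r * √B) := by gcongr
    _ ≤ r * ((p ^ 2 + B) / 2) := by
      nlinarith [mul_nonneg hr (sq_nonneg (|p| - √B)), Real.sq_sqrt hB, sq_abs p]

theorem deriv_smoothTransition_nonneg (z : ℝ) : 0 ≤ deriv smoothTransition z :=
  smoothTransition.monotone.deriv_nonneg

theorem deriv_smoothTransition_of_neg {z : ℝ} (hz : z < 0) : deriv smoothTransition z = 0 := by
  have hzero : smoothTransition =ᶠ[𝓝 z] fun _ => 0 := by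
    filter_upwards [Iio_mem_nhds hz] with y hy using smoothTransition.zero_of_nonpos (le_of_lt hy)
  rw [hzero.deriv_eq, deriv_const]

section Cone

variable {E : Type*} [NormedAddCommGroup E] {x₀ x : E} {ρ t : ℝ}

/-- A smooth weight whose restriction to times `t < ρ` is positive exactly on the open backward
cone `‖x - x₀‖ < ρ - t`. -/
def coneWeight (x₀ : E) (ρ : ℝ) (p : E × ℝ) : ℝ :=
  smoothTransition ((ρ - p.2) ^ 2 - ‖p.1 - x₀‖ ^ 2)

theorem coneWeight_nonneg (p : E × ℝ) : 0 ≤ coneWeight x₀ ρ p := smoothTransition.nonneg _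

theorem coneWeight_vertex_pos (ht : t < ρ) : 0 < coneWeight x₀ ρ (x₀, t) :=
  smoothTransition.pos_of_pos (by simpa using pow_pos (sub_pos.2 ht) 2)

theorem coneWeight_eq_zero (ht₀ : 0 ≤ t) (ht : t ≤ ρ) (hx : x ∉ ball x₀ ρ) :
    coneWeight x₀ ρ (x, t) = 0 := by
  rw [mem_ball, dist_eq_norm, not_lt] at hx
  refine smoothTransition.zero_of_nonpos (sub_nonpos.2 ?_)
  have := sub_nonneg.2 ht
  gcongr
  linarith

variable [InnerProductSpace ℝ E]

theorem contDiff_coneWeight : ContDiff ℝ 1 (coneWeight x₀ ρ) :=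
  smoothTransition.contDiff.comp
    (((contDiff_const.sub contDiff_snd).pow 2).sub ((contDiff_fst.sub contDiff_const).norm_sq ℝ))

theorem fderiv_coneWeight_apply (p c : E × ℝ) :
    fderiv ℝ (coneWeight x₀ ρ) p c = deriv smoothTransition ((ρ - p.2) ^ 2 - ‖p.1 - x₀‖ ^ 2)
      * (-2 * ((ρ - p.2) * c.2 + ⟪p.1 - x₀, c.1⟫_ℝ)) := by
  have hsub : HasFDerivAt (fun q : E × ℝ => ρ - q.2) (-.snd ℝ E ℝ) p := hasFDerivAt_snd.const_sub ρ
  have htime := HasFDerivAt.pow hsub 2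
  have hspace := (HasFDerivAt.sub_const x₀ (hasFDerivAt_fst (𝕜 := ℝ) (p := p))).norm_sq
  have htrans := ((smoothTransition.contDiff (n := 1)).differentiable (by norm_num)
    ((ρ - p.2) ^ 2 - ‖p.1 - x₀‖ ^ 2)).hasDerivAt.comp_hasFDerivAt p (htime.fun_sub hspace)
  rw [HasFDerivAt.fderiv (f := coneWeight x₀ ρ) htrans]
  simp only [smul_apply, sub_apply, neg_apply, ContinuousLinearMap.coe_snd',
    ContinuousLinearMap.coe_comp, Function.comp_apply, ContinuousLinearMap.coe_fst',
    innerSL_apply_apply, smul_eq_mul, nsmul_eq_mul]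
  push_cast
  ring

end Cone

section Energy

variable {E ι : Type*} [NormedAddCommGroup E] [InnerProductSpace ℝ E] [Fintype ι]
  {b : OrthonormalBasis ι ℝ E} {f g : E → ℝ} {u : E × ℝ → ℝ}
  {u' : E × ℝ → E × ℝ →L[ℝ] ℝ} {u'' : E × ℝ → E × ℝ →L[ℝ] E × ℝ →L[ℝ] ℝ} {t : ℝ}

/-- The density `((∂u/∂t)² + |∇u|²) / 2` of the wave energy, in terms of the total derivative `u'`
of `u` and an orthonormal basis `b`. -/
def energyDensity (b : OrthonormalBasis ι ℝ E) (u' : E × ℝ → E × ℝ →L[ℝ] ℝ) (p : E × ℝ) : ℝ :=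
  (u' p (0, 1) ^ 2 + ∑ i, u' p (b i, 0) ^ 2) / 2

theorem energyDensity_nonneg (p : E × ℝ) : 0 ≤ energyDensity b u' p := by
  unfold energyDensity; positivity

variable {x₀ : E} {ρ : ℝ} {ψ : E × ℝ → ℝ} {K : Set E} {I : Set ℝ}

/-- The derivative along `v` of the `v`-component `ψ * ∂u/∂t * ∂u/∂v` of the energy flux weighted
by `ψ`, in terms of the total derivatives `u'` and `u''` of `u`. -/
def fluxDeriv (ψ : E × ℝ → ℝ) (u' : E × ℝ → E × ℝ →L[ℝ] ℝ)
    (u'' : E × ℝ → E × ℝ →L[ℝ] E × ℝ →L[ℝ] ℝ) (v : E) (p : E × ℝ) : ℝ :=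
  fderiv ℝ ψ p (v, 0) * (u' p (0, 1) * u' p (v, 0))
    + ψ p * (u'' p (v, 0) (0, 1) * u' p (v, 0) + u' p (0, 1) * u'' p (v, 0) (v, 0))

theorem coneWeight_dissipation_nonpos (x : E) (ht : t < ρ) :
    fderiv ℝ (coneWeight x₀ ρ) (x, t) (0, 1) * energyDensity b u' (x, t)
      - u' (x, t) (0, 1) * ∑ i, fderiv ℝ (coneWeight x₀ ρ) (x, t) (b i, 0) * u' (x, t) (b i, 0)
      - coneWeight x₀ ρ (x, t) * u' (x, t) (0, 1) ^ 2 ≤ 0 := by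
  set z := (ρ - t) ^ 2 - ‖x - x₀‖ ^ 2
  have hcone : deriv smoothTransition z
        * (u' (x, t) (0, 1) * ∑ i, ⟪x - x₀, b i⟫_ℝ * u' (x, t) (b i, 0))
      ≤ deriv smoothTransition z * ((ρ - t) * energyDensity b u' (x, t)) := by
    rcases lt_or_ge z 0 with hz | hz
    · simp [deriv_smoothTransition_of_neg hz]
    · refine mul_le_mul_of_nonneg_left ?_ (deriv_smoothTransition_nonneg z)
      refine mul_sum_mul_le_mul_energy (sub_nonneg.2 ht.le) ?_
      have hsum := b.sum_sq_norm_inner_left (x - x₀)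
      simp only [norm_eq_abs, sq_abs] at hsum
      rw [hsum]
      exact sub_nonneg.1 hz
  have hdiss := mul_nonneg (coneWeight_nonneg (x₀ := x₀) (ρ := ρ) (x, t))
    (sq_nonneg (u' (x, t) (0, 1)))
  have hflux : ∑ i, fderiv ℝ (coneWeight x₀ ρ) (x, t) (b i, 0) * u' (x, t) (b i, 0)
      = -2 * (deriv smoothTransition z * ∑ i, ⟪x - x₀, b i⟫_ℝ * u' (x, t) (b i, 0)) := by
    simp only [Finset.mul_sum, fderiv_coneWeight_apply, mul_zero, zero_add]
    exact Finset.sum_congr rfl fun i _ => by ring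
  rw [hflux, fderiv_coneWeight_apply, inner_zero_right]
  linarith

namespace IsDampedWave

theorem continuousOn_energyDensity (h : IsDampedWave b f g u u' u'') :
    ContinuousOn (energyDensity b u') (univ ×ˢ Ici 0) :=
  (((h.continuousOn_deriv_apply (0, 1)).pow 2).add (continuousOn_finsetSum Finset.univ fun i _ =>
    (h.continuousOn_deriv_apply (b i, 0)).pow 2)).div_const 2

theorem hasDerivAt_energyDensity (h : IsDampedWave b f g u u' u'') (x : E) (ht : 0 < t) :
    HasDerivAt (fun t => energyDensity b u' (x, t)) (u' (x, t) (0, 1) * u'' (x, t) (0, 1) (0, 1)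
      + ∑ i, u' (x, t) (b i, 0) * u'' (x, t) (0, 1) (b i, 0)) t := by
  have hd (c : E × ℝ) : HasDerivAt (fun t => u' (x, t) c) (u'' (x, t) (0, 1) c) t :=
    hasDerivAt_time_of_hasFDerivAt (h.hasFDerivAt_deriv_apply x ht c)
  refine ((((hd (0, 1)).pow 2).add (HasDerivAt.fun_sum (u := Finset.univ)
    fun i _ => (hd (b i, 0)).pow 2)).div_const 2).congr_deriv ?_
  simp only [add_div, Finset.sum_div]
  exact congrArg₂ _ (by push_cast; ring)
    (Finset.sum_congr rfl fun i _ => by push_cast; ring)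

theorem energyDensity_init_eq_zero (h : IsDampedWave b f g u u' u'') {x : E}
    (hf : f =ᶠ[𝓝 x] 0) (hg : g x = 0) : energyDensity b u' (x, 0) = 0 := by
  have hspace : u' (x, 0) ∘L .inl ℝ E ℝ = 0 :=
    (h.init_space x).unique ((hasFDerivAt_const (0 : ℝ) x).congr_of_eventuallyEq hf)
  have hb (i : ι) : u' (x, 0) (b i, 0) = 0 := by simpa using congrArg (· (b i)) hspace
  simp [energyDensity, hb, h.init_time x, hg]

theorem continuousOn_fluxDeriv (h : IsDampedWave b f g u u' u'') (hψ : ContDiff ℝ 1 ψ) (v : E) :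
    ContinuousOn (fluxDeriv ψ u' u'' v) (univ ×ˢ Ioi 0) := by
  have hu' (c : E × ℝ) : ContinuousOn (fun p => u' p c) (univ ×ˢ Ioi 0) :=
    (h.continuousOn_deriv_apply c).mono (prod_mono subset_rfl Ioi_subset_Ici_self)
  exact (((hψ.continuous_fderiv one_ne_zero).clm_apply continuous_const).continuousOn.mul
    ((hu' _).mul (hu' _))).add
    (hψ.continuous.continuousOn.mul (((h.continuousOn_deriv₂_apply _ _).mul (hu' _)).add
      ((hu' _).mul (h.continuousOn_deriv₂_apply _ _))))

theorem hasLineDerivAt_flux (h : IsDampedWave b f g u u' u'') (hψ : ContDiff ℝ 1 ψ) (x v : E)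
    (ht : 0 < t) : HasLineDerivAt ℝ (fun x => ψ (x, t) * (u' (x, t) (0, 1) * u' (x, t) (v, 0)))
      (fluxDeriv ψ u' u'' v (x, t)) x v := by
  have hψ' : HasLineDerivAt ℝ (fun x => ψ (x, t)) (fderiv ℝ ψ (x, t) (v, 0)) x v :=
    hasDerivAt_space_of_hasFDerivAt
      (by simpa using (hψ.differentiable one_ne_zero (x, t)).hasFDerivAt)
  refine (HasDerivAt.fun_mul hψ' (HasDerivAt.fun_mul (h.hasLineDerivAt_deriv x v ht (0, 1))
    (h.hasLineDerivAt_deriv x v ht (v, 0)))).congr_deriv ?_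
  simp [fluxDeriv]

theorem deriv_mul_energyDensity_eq (h : IsDampedWave b f g u u' u'') (x : E) (ht : 0 < t) :
    fderiv ℝ ψ (x, t) (0, 1) * energyDensity b u' (x, t)
        + ψ (x, t) * (u' (x, t) (0, 1) * u'' (x, t) (0, 1) (0, 1)
          + ∑ i, u' (x, t) (b i, 0) * u'' (x, t) (0, 1) (b i, 0))
      = fderiv ℝ ψ (x, t) (0, 1) * energyDensity b u' (x, t)
        - u' (x, t) (0, 1) * ∑ i, fderiv ℝ ψ (x, t) (b i, 0) * u' (x, t) (b i, 0)
        - ψ (x, t) * u' (x, t) (0, 1) ^ 2 + ∑ i, fluxDeriv ψ u' u'' (b i) (x, t) := by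
  have hflux : ∑ i, fluxDeriv ψ u' u'' (b i) (x, t)
      = u' (x, t) (0, 1) * ∑ i, fderiv ℝ ψ (x, t) (b i, 0) * u' (x, t) (b i, 0)
        + ψ (x, t) * (∑ i, u' (x, t) (b i, 0) * u'' (x, t) (0, 1) (b i, 0)
          + u' (x, t) (0, 1) * ∑ i, u'' (x, t) (b i, 0) (b i, 0)) := by
    simp only [Finset.mul_sum, mul_add, ← Finset.sum_add_distrib]
    refine Finset.sum_congr rfl fun i _ => ?_
    rw [fluxDeriv, h.deriv₂_symm x ht (b i, 0) (0, 1)]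
    ring
  rw [hflux]
  linear_combination (ψ (x, t) * u' (x, t) (0, 1)) * h.pde x t ht

variable [FiniteDimensional ℝ E] [MeasurableSpace E] [BorelSpace E]

theorem integrable_fluxDeriv_and_integral_eq_zero (h : IsDampedWave b f g u u' u'')
    (hψ : ContDiff ℝ 1 ψ) (hK : IsCompact K) (hz : ∀ x ∉ K, ψ (x, t) = 0) (ht : 0 < t) (v : E) :
    Integrable (fun x => fluxDeriv ψ u' u'' v (x, t)) ∧ ∫ x, fluxDeriv ψ u' u'' v (x, t) = 0 := by
  refine integrable_and_integral_eq_zero_of_hasLineDerivAt hK ?_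
    (continuous_slice_of_continuousOn (h.continuousOn_fluxDeriv hψ v) ht)
    (fun x => h.hasLineDerivAt_flux hψ x v ht) fun x hx => by rw [hz x hx, zero_mul]
  exact (hψ.continuous.comp (by fun_prop)).mul
    ((continuous_slice_of_continuousOn (h.continuousOn_deriv_apply _) ht.le).mul
      (continuous_slice_of_continuousOn (h.continuousOn_deriv_apply _) ht.le))

theorem hasDerivAt_integral_mul_energyDensity (h : IsDampedWave b f g u u' u'')
    (hψ : ContDiff ℝ 1 ψ) (hK : IsCompact K) (hI : IsOpen I) (hI₀ : I ⊆ Ioi 0)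
    (hz : ∀ x ∉ K, ∀ t ∈ I, ψ (x, t) = 0) (ht : t ∈ I) :
    HasDerivAt (fun t => ∫ x, ψ (x, t) * energyDensity b u' (x, t))
      (∫ x, (fderiv ℝ ψ (x, t) (0, 1) * energyDensity b u' (x, t)
        - u' (x, t) (0, 1) * ∑ i, fderiv ℝ ψ (x, t) (b i, 0) * u' (x, t) (b i, 0)
        - ψ (x, t) * u' (x, t) (0, 1) ^ 2)) t := by
  have hu' (c : E × ℝ) : ContinuousOn (fun p => u' p c) (univ ×ˢ I) :=
    (h.continuousOn_deriv_apply c).mono (prod_mono subset_rfl (hI₀.trans Ioi_subset_Ici_self))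
  have hu'' (c d : E × ℝ) : ContinuousOn (fun p => u'' p c d) (univ ×ˢ I) :=
    (h.continuousOn_deriv₂_apply c d).mono (prod_mono subset_rfl hI₀)
  have he : ContinuousOn (energyDensity b u') (univ ×ˢ I) :=
    h.continuousOn_energyDensity.mono (prod_mono subset_rfl (hI₀.trans Ioi_subset_Ici_self))
  have hψ' (x : E) (t : ℝ) : HasDerivAt (fun t => ψ (x, t)) (fderiv ℝ ψ (x, t) (0, 1)) t :=
    hasDerivAt_time_of_hasFDerivAt (hψ.differentiable one_ne_zero (x, t)).hasFDerivAt
  let F (p : E × ℝ) : ℝ := ψ p * energyDensity b u' p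
  have hF : ContinuousOn F (univ ×ˢ I) := hψ.continuous.continuousOn.mul he
  let F' (p : E × ℝ) : ℝ := fderiv ℝ ψ p (0, 1) * energyDensity b u' p
    + ψ p * (u' p (0, 1) * u'' p (0, 1) (0, 1) + ∑ i, u' p (b i, 0) * u'' p (0, 1) (b i, 0))
  have hF' : ContinuousOn F' (univ ×ˢ I) :=
    (((hψ.continuous_fderiv one_ne_zero).clm_apply continuous_const).continuousOn.mul he).add
      (hψ.continuous.continuousOn.mul (((hu' _).mul (hu'' _ _)).add
        (continuousOn_finsetSum Finset.univ fun i _ => (hu' _).mul (hu'' _ _))))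
  have hd (x : E) (t : ℝ) (ht : t ∈ I) :
      HasDerivAt (fun t => F (x, t)) (F' (x, t)) t :=
    (hψ' x t).fun_mul (h.hasDerivAt_energyDensity x (hI₀ ht))
  have hzF (x : E) (hx : x ∉ K) (t : ℝ) (ht : t ∈ I) : F (x, t) = 0 := by
    simp only [F, hz x hx t ht, zero_mul]
  have hflux (i : ι) := h.integrable_fluxDeriv_and_integral_eq_zero hψ hK
    (fun x hx => hz x hx t ht) (hI₀ ht) (b i)
  have hint := integrable_slice_of_isCompact (μ := volume) hK hF'
    (deriv_slice_eq_zero_of_isOpen hI hd hzF) ht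
  refine (hasDerivAt_integral_slice_of_isCompact hK hI hF hF' hd hzF ht).congr_deriv ?_
  simp only [F', h.deriv_mul_energyDensity_eq _ (hI₀ ht)] at hint ⊢
  have hsum : Integrable fun x => ∑ i, fluxDeriv ψ u' u'' (b i) (x, t) :=
    integrable_finsetSum _ fun i _ => (hflux i).1
  have hdiss := hint.sub hsum
  simp only [Pi.sub_def, add_sub_cancel_right] at hdiss
  rw [integral_add hdiss hsum,
    integral_finsetSum _ fun i _ => (hflux i).1,
    Finset.sum_eq_zero fun i _ => (hflux i).2, add_zero]

theorem antitoneOn_integral_coneWeight_mul_energyDensity (h : IsDampedWave b f g u u' u'') :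
    AntitoneOn (fun t => ∫ x, coneWeight x₀ ρ (x, t) * energyDensity b u' (x, t)) (Ico 0 ρ) := by
  have hz (x) (hx : x ∉ closedBall x₀ ρ) (t) (ht : t ∈ Ico 0 ρ) : coneWeight x₀ ρ (x, t) = 0 :=
    coneWeight_eq_zero ht.1 ht.2.le (notMem_subset ball_subset_closedBall hx)
  have hderiv (t) (ht : t ∈ Ioo 0 ρ) := h.hasDerivAt_integral_mul_energyDensity
    contDiff_coneWeight (isCompact_closedBall x₀ ρ) isOpen_Ioo Ioo_subset_Ioi_self
    (fun x hx t ht => hz x hx t (Ioo_subset_Ico_self ht)) ht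
  refine antitoneOn_of_deriv_nonpos (convex_Ico 0 ρ) ?_ (fun t ht => ?_) (fun t ht => ?_)
  · refine continuousOn_integral_slice_of_isCompact
      (F := fun p => coneWeight x₀ ρ p * energyDensity b u' p) (isCompact_closedBall x₀ ρ) ?_
      fun x hx t ht => by rw [hz x hx t ht, zero_mul]
    exact contDiff_coneWeight.continuous.continuousOn.mul
      (h.continuousOn_energyDensity.mono (prod_mono subset_rfl Ico_subset_Ici_self))
  · rw [interior_Ico] at ht
    exact (hderiv t ht).differentiableAt.differentiableWithinAt
  · rw [interior_Ico] at ht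
    rw [(hderiv t ht).deriv]
    exact integral_nonpos fun x => coneWeight_dissipation_nonpos x ht.2

theorem energyDensity_eq_zero_of_init_eq_zero (h : IsDampedWave b f g u u' u'')
    (hf : ∀ x ∈ ball x₀ ρ, f x = 0) (hg : ∀ x ∈ ball x₀ ρ, g x = 0) (ht₀ : 0 ≤ t) (ht : t < ρ) :
    energyDensity b u' (x₀, t) = 0 := by
  set F := fun x => coneWeight x₀ ρ (x, t) * energyDensity b u' (x, t)
  have hF : Continuous F := (contDiff_coneWeight.continuous.comp (by fun_prop)).mul
    (continuous_slice_of_continuousOn h.continuousOn_energyDensity ht₀)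
  have hinit : ∫ x, coneWeight x₀ ρ (x, 0) * energyDensity b u' (x, 0) = 0 := by
    refine integral_eq_zero_of_ae (Eventually.of_forall fun x => ?_)
    by_cases hx : x ∈ ball x₀ ρ
    · have hf' : f =ᶠ[𝓝 x] 0 := by
        filter_upwards [isOpen_ball.mem_nhds hx] with y hy using hf y hy
      simp [h.energyDensity_init_eq_zero hf' (hg x hx)]
    · simp [coneWeight_eq_zero le_rfl (ht₀.trans ht.le) hx]
  have hle : ∫ x, F x ≤ 0 := hinit ▸ h.antitoneOn_integral_coneWeight_mul_energyDensity
    ⟨le_rfl, ht₀.trans_lt ht⟩ ⟨ht₀, ht⟩ ht₀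
  have hcompact : HasCompactSupport F :=
    HasCompactSupport.intro (isCompact_closedBall x₀ ρ) fun x hx => by
      simp [F, coneWeight_eq_zero ht₀ ht.le (notMem_subset ball_subset_closedBall hx)]
  have hvertex : F x₀ = 0 := by
    by_contra hne
    exact hle.not_gt (hF.integral_pos_of_hasCompactSupport_nonneg_nonzero hcompact
      (fun x => mul_nonneg (coneWeight_nonneg _) (energyDensity_nonneg _)) hne)
  exact (mul_eq_zero.1 hvertex).resolve_left (coneWeight_vertex_pos ht).ne'

theorem eq_zero_of_init_eq_zero (h : IsDampedWave b f g u u' u'')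
    (hf : ∀ x ∈ ball x₀ ρ, f x = 0) (hg : ∀ x ∈ ball x₀ ρ, g x = 0) (ht₀ : 0 ≤ t) (ht : t < ρ) :
    u (x₀, t) = 0 := by
  have htime (s : ℝ) (hs : s ∈ Ioo 0 t) : u' (x₀, s) (0, 1) = 0 := by
    have he := h.energyDensity_eq_zero_of_init_eq_zero hf hg hs.1.le (hs.2.trans ht)
    have hspace : 0 ≤ ∑ i, u' (x₀, s) (b i, 0) ^ 2 := Finset.sum_nonneg fun i _ => sq_nonneg _
    unfold energyDensity at he
    nlinarith [sq_nonneg (u' (x₀, s) (0, 1))]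
  have hcont : ContinuousOn (fun s => u (x₀, s)) (Icc 0 t) :=
    h.continuousOn.comp (by fun_prop) fun s hs => ⟨mem_univ _, hs.1⟩
  rcases ht₀.eq_or_lt with rfl | hpos
  · rw [h.init, hf x₀ (mem_ball_self ht)]
  · obtain ⟨s, hs, hslope⟩ := exists_hasDerivAt_eq_slope _ _ hpos hcont fun s hs =>
      hasDerivAt_time_of_hasFDerivAt (h.hasFDerivAt x₀ s hs.1)
    rw [htime s hs, h.init, hf x₀ (mem_ball_self (hpos.trans ht)), sub_zero, sub_zero] at hslope
    exact (div_eq_zero_iff.1 hslope.symm).resolve_right hpos.ne'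

end IsDampedWave

end Energy

section FiniteSpeed

variable {E ι : Type*} [NormedAddCommGroup E] [InnerProductSpace ℝ E] [FiniteDimensional ℝ E]
  [MeasurableSpace E] [BorelSpace E] [Fintype ι]
  {b : OrthonormalBasis ι ℝ E} {f g : E → ℝ} {u : E × ℝ → ℝ}
  {u' : E × ℝ → E × ℝ →L[ℝ] ℝ} {u'' : E × ℝ → E × ℝ →L[ℝ] E × ℝ →L[ℝ] ℝ} {R t : ℝ} {x : E}

namespace IsDampedWave

theorem eq_zero_of_lt_norm (h : IsDampedWave b f g u u' u'') (hf : ∀ x, R < ‖x‖ → f x = 0)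
    (hg : ∀ x, R < ‖x‖ → g x = 0) (ht : 0 ≤ t) (hx : R + t < ‖x‖) : u (x, t) = 0 := by
  have hball (y) (hy : y ∈ ball x (‖x‖ - R)) : R < ‖y‖ := by
    rw [mem_ball, dist_comm, dist_eq_norm] at hy
    linarith [norm_sub_norm_le x y]
  exact h.eq_zero_of_init_eq_zero (fun y hy => hf y (hball y hy)) (fun y hy => hg y (hball y hy)) ht
    (by linarith)

theorem deriv_eq_zero_of_lt_norm (h : IsDampedWave b f g u u' u'') (hf : ∀ x, R < ‖x‖ → f x = 0)
    (hg : ∀ x, R < ‖x‖ → g x = 0) (ht : 0 < t) (hx : R + t < ‖x‖) : u' (x, t) = 0 := by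
  have hopen : IsOpen {p : E × ℝ | 0 < p.2 ∧ R + p.2 < ‖p.1‖} :=
    (isOpen_lt continuous_const continuous_snd).inter
      (isOpen_lt (continuous_const.add continuous_snd) continuous_fst.norm)
  refine (h.hasFDerivAt x t ht).unique
    ((hasFDerivAt_const (0 : ℝ) (x, t)).congr_of_eventuallyEq ?_)
  filter_upwards [hopen.mem_nhds (show (x, t) ∈ _ from ⟨ht, hx⟩)] with p hp
    using h.eq_zero_of_lt_norm hf hg hp.1.le hp.2

theorem deriv_time_eq_zero_of_lt_norm (h : IsDampedWave b f g u u' u'')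
    (hf : ∀ x, R < ‖x‖ → f x = 0) (hg : ∀ x, R < ‖x‖ → g x = 0) (ht : 0 ≤ t)
    (hx : R + t < ‖x‖) : u' (x, t) (0, 1) = 0 := by
  rcases ht.eq_or_lt with rfl | hpos
  · rw [h.init_time, hg x (by simpa using hx)]
  · simp [h.deriv_eq_zero_of_lt_norm hf hg hpos hx]

end IsDampedWave

end FiniteSpeed

/-! ### The damped wave equation on the Fourier side -/

section PropagatingSupport

variable {E G : Type*} [NormedAddCommGroup E] [InnerProductSpace ℝ E] [FiniteDimensional ℝ E]
  [MeasurableSpace E] [BorelSpace E] [NormedAddCommGroup G] [NormedSpace ℂ G]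
  {F F' : E × ℝ → G} {R t : ℝ}

theorem continuousOn_fourier_slice_of_lt_norm (hF : ContinuousOn F (univ ×ˢ Ici 0))
    (hz : ∀ t ≥ 0, ∀ x, R + t < ‖x‖ → F (x, t) = 0) (ξ : E) :
    ContinuousOn (fun t => 𝓕 (fun x => F (x, t)) ξ) (Ici 0) := by
  intro t ht
  have hlocal : ContinuousOn (fun t => 𝓕 (fun x => F (x, t)) ξ) (Ico 0 (t + 1)) := by
    refine continuousOn_fourier_slice_of_isCompact (isCompact_closedBall 0 (R + (t + 1)))
      (hF.mono (prod_mono subset_rfl Ico_subset_Ici_self)) (fun x hx s hs => hz s hs.1 x ?_) ξ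
    rw [mem_closedBall_zero_iff, not_le] at hx
    linarith [hs.2]
  refine (hlocal t ⟨ht, lt_add_one t⟩).mono_of_mem_nhdsWithin ?_
  rw [← Ici_inter_Iio]
  exact inter_mem_nhdsWithin _ (Iio_mem_nhds (lt_add_one t))

theorem hasDerivAt_fourier_slice_of_lt_norm (hF : ContinuousOn F (univ ×ˢ Ioi 0))
    (hF' : ContinuousOn F' (univ ×ˢ Ioi 0))
    (hd : ∀ x, ∀ t > 0, HasDerivAt (fun s => F (x, s)) (F' (x, t)) t)
    (hz : ∀ t > 0, ∀ x, R + t < ‖x‖ → F (x, t) = 0) (ht : 0 < t) (ξ : E) :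
    HasDerivAt (fun t => 𝓕 (fun x => F (x, t)) ξ) (𝓕 (fun x => F' (x, t)) ξ) t := by
  have hI : (univ : Set E) ×ˢ Ioo 0 (t + 1) ⊆ univ ×ˢ Ioi 0 :=
    prod_mono subset_rfl Ioo_subset_Ioi_self
  refine hasDerivAt_fourier_slice_of_isCompact (isCompact_closedBall 0 (R + (t + 1))) isOpen_Ioo
    (hF.mono hI) (hF'.mono hI) (fun x s hs => hd x s hs.1) (fun x hx s hs => hz s hs.1 x ?_)
    ⟨ht, lt_add_one t⟩ ξ
  rw [mem_closedBall_zero_iff, not_le] at hx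
  linarith [hs.2]

end PropagatingSupport

namespace IsDampedWave

variable {E ι : Type*} [NormedAddCommGroup E] [InnerProductSpace ℝ E] [FiniteDimensional ℝ E]
  [MeasurableSpace E] [BorelSpace E] [Fintype ι]
  {b : OrthonormalBasis ι ℝ E} {f g : E → ℝ} {u : E × ℝ → ℝ}
  {u' : E × ℝ → E × ℝ →L[ℝ] ℝ} {u'' : E × ℝ → E × ℝ →L[ℝ] E × ℝ →L[ℝ] ℝ} {R t : ℝ}

theorem integrable_slice (h : IsDampedWave b f g u u' u'') (hf : ∀ x, R < ‖x‖ → f x = 0)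
    (hg : ∀ x, R < ‖x‖ → g x = 0) (ht : 0 ≤ t) : Integrable fun x => u (x, t) :=
  (continuous_slice_of_continuousOn h.continuousOn ht).integrable_of_hasCompactSupport
    (HasCompactSupport.intro (isCompact_closedBall 0 (R + t)) fun x hx =>
      h.eq_zero_of_lt_norm hf hg ht (by simpa using hx))

theorem integrable_slice_deriv_time (h : IsDampedWave b f g u u' u'')
    (hf : ∀ x, R < ‖x‖ → f x = 0) (hg : ∀ x, R < ‖x‖ → g x = 0) (ht : 0 ≤ t) :
    Integrable fun x => u' (x, t) (0, 1) :=
  (continuous_slice_of_continuousOn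
      (h.continuousOn_deriv_apply _) ht).integrable_of_hasCompactSupport
    (HasCompactSupport.intro (isCompact_closedBall 0 (R + t)) fun x hx =>
      h.deriv_time_eq_zero_of_lt_norm hf hg ht (by simpa using hx))

theorem integrable_deriv₂_space_and_fourier_eq (h : IsDampedWave b f g u u' u'')
    (hf : ∀ x, R < ‖x‖ → f x = 0) (hg : ∀ x, R < ‖x‖ → g x = 0) (ht : 0 < t) (v ξ : E) :
    Integrable (fun x => u'' (x, t) (v, 0) (v, 0)) ∧
      𝓕 (fun x => (u'' (x, t) (v, 0) (v, 0) : ℂ)) ξ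
        = (-(4 * π ^ 2 * ⟪v, ξ⟫_ℝ ^ 2) : ℂ) • 𝓕 (fun x => (u (x, t) : ℂ)) ξ := by
  have hu := continuous_slice_of_continuousOn h.continuousOn ht.le
  have hu' := continuous_slice_of_continuousOn (h.continuousOn_deriv_apply (v, 0)) ht.le
  have hu'' := continuous_slice_of_continuousOn (h.continuousOn_deriv₂_apply (v, 0) (v, 0)) ht
  have hK := isCompact_closedBall (0 : E) (R + t)
  have hz (x) (hx : x ∉ closedBall 0 (R + t)) : u (x, t) = 0 :=
    h.eq_zero_of_lt_norm hf hg ht.le (by simpa using hx)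
  have hd (x) := h.hasLineDerivAt x v ht
  have hd' (x) := h.hasLineDerivAt_deriv x v ht (v, 0)
  have hint' := (integrable_and_integral_eq_zero_of_hasLineDerivAt (μ := volume) hK hu hu' hd hz).1
  have hint'' := (integrable_and_integral_eq_zero_of_hasLineDerivAt (μ := volume) hK hu' hu'' hd'
    (lineDeriv_eq_zero_of_isOpen hK.isClosed.isOpen_compl hd hz)).1
  have hdc (x) : HasLineDerivAt ℝ (fun x => (u (x, t) : ℂ)) (u' (x, t) (v, 0)) x v :=
    HasDerivAt.ofReal_comp (hd x)
  have hdc' (x) : HasLineDerivAt ℝ (fun x => (u' (x, t) (v, 0) : ℂ))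
      (u'' (x, t) (v, 0) (v, 0)) x v :=
    HasDerivAt.ofReal_comp (hd' x)
  exact ⟨hint'', fourier_of_hasLineDerivAt_of_hasLineDerivAt
    (h.integrable_slice hf hg ht.le).ofReal hint'.ofReal hint''.ofReal hdc hdc' ξ⟩

theorem fourier_deriv₂_time_eq (h : IsDampedWave b f g u u' u'') (hf : ∀ x, R < ‖x‖ → f x = 0)
    (hg : ∀ x, R < ‖x‖ → g x = 0) (ht : 0 < t) (ξ : E) :
    𝓕 (fun x => (u'' (x, t) (0, 1) (0, 1) : ℂ)) ξ
      = -𝓕 (fun x => (u' (x, t) (0, 1) : ℂ)) ξ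
        - (4 * π ^ 2 * ‖ξ‖ ^ 2) • 𝓕 (fun x => (u (x, t) : ℂ)) ξ := by
  have hspace (i : ι) := h.integrable_deriv₂_space_and_fourier_eq hf hg ht (b i) ξ
  have hpde (x) : (u'' (x, t) (0, 1) (0, 1) : ℂ)
      = ∑ i, (u'' (x, t) (b i, 0) (b i, 0) : ℂ) - u' (x, t) (0, 1) := by
    exact_mod_cast by linear_combination h.pde x t ht
  have hint {w : E → ℝ} (hw : Integrable w) : Integrable fun x => 𝐞 (-⟪x, ξ⟫_ℝ) • (w x : ℂ) :=
    (Real.fourierIntegral_convergent_iff ξ).2 hw.ofReal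
  have hsum : 𝓕 (fun x => (u'' (x, t) (0, 1) (0, 1) : ℂ)) ξ
      = ∑ i, 𝓕 (fun x => (u'' (x, t) (b i, 0) (b i, 0) : ℂ)) ξ
        - 𝓕 (fun x => (u' (x, t) (0, 1) : ℂ)) ξ := by
    simp only [Real.fourier_eq, hpde, smul_sub, Finset.smul_sum]
    rw [integral_sub (integrable_finsetSum _ fun i _ => hint (hspace i).1)
      (hint (h.integrable_slice_deriv_time hf hg ht.le)),
      integral_finsetSum _ fun i _ => hint (hspace i).1]
  have hnorm : (∑ i, (⟪b i, ξ⟫_ℝ : ℂ) ^ 2) = (‖ξ‖ : ℂ) ^ 2 := by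
    have := b.sum_sq_norm_inner_right ξ
    simp only [norm_eq_abs, sq_abs] at this
    exact_mod_cast this
  rw [hsum, Finset.sum_congr rfl fun i _ => (hspace i).2, ← Finset.sum_smul,
    Finset.sum_neg_distrib, ← Finset.mul_sum, hnorm, neg_smul, Complex.real_smul, smul_eq_mul]
  push_cast
  ring

theorem isDampedOscillator_fourier (h : IsDampedWave b f g u u' u'')
    (hf : ∀ x, R < ‖x‖ → f x = 0) (hg : ∀ x, R < ‖x‖ → g x = 0) (ξ : E) :
    IsDampedOscillator (4 * π ^ 2 * ‖ξ‖ ^ 2) (fun t => 𝓕 (fun x => (u (x, t) : ℂ)) ξ)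
      (fun t => 𝓕 (fun x => (u' (x, t) (0, 1) : ℂ)) ξ) := by
  have hsub : (univ : Set E) ×ˢ Ioi (0 : ℝ) ⊆ univ ×ˢ Ici 0 :=
    prod_mono subset_rfl Ioi_subset_Ici_self
  have hu := Complex.continuous_ofReal.comp_continuousOn h.continuousOn
  have hu' := Complex.continuous_ofReal.comp_continuousOn (h.continuousOn_deriv_apply (0, 1))
  have hu'' := Complex.continuous_ofReal.comp_continuousOn
    (h.continuousOn_deriv₂_apply (0, 1) (0, 1))
  have hz (t) (ht : t ≥ 0) (x : E) (hx : R + t < ‖x‖) : (u (x, t) : ℂ) = 0 :=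
    mod_cast h.eq_zero_of_lt_norm hf hg ht hx
  have hz' (t) (ht : t ≥ 0) (x : E) (hx : R + t < ‖x‖) : (u' (x, t) (0, 1) : ℂ) = 0 :=
    mod_cast h.deriv_time_eq_zero_of_lt_norm hf hg ht hx
  refine ⟨continuousOn_fourier_slice_of_lt_norm hu hz ξ,
    continuousOn_fourier_slice_of_lt_norm hu' hz' ξ, fun t ht => ?_, fun t ht => ?_⟩
  · exact hasDerivAt_fourier_slice_of_lt_norm (hu.mono hsub) (hu'.mono hsub)
      (fun x t ht => (hasDerivAt_time_of_hasFDerivAt (h.hasFDerivAt x t ht)).ofReal_comp)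
      (fun t ht => hz t ht.le) ht ξ
  · refine (hasDerivAt_fourier_slice_of_lt_norm (hu'.mono hsub) hu''
      (fun x t ht => (hasDerivAt_time_of_hasFDerivAt
        (h.hasFDerivAt_deriv_apply x ht (0, 1))).ofReal_comp)
      (fun t ht => hz' t ht.le) ht ξ).congr_deriv ?_
    exact h.fourier_deriv₂_time_eq hf hg ht ξ

theorem norm_fourier_sub_le (h : IsDampedWave b f g u u' u'') (hf : ∀ x, R < ‖x‖ → f x = 0)
    (hg : ∀ x, R < ‖x‖ → g x = 0) (ht : 0 ≤ t) (ξ : E) {s : ℝ} (hs : s = 4 * π ^ 2 * ‖ξ‖ ^ 2) :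
    ‖𝓕 (fun x => (u (x, t) : ℂ)) ξ
        - exp (-s * t) • (𝓕 (fun x => (f x : ℂ)) ξ + 𝓕 (fun x => (g x : ℂ)) ξ)‖
      ≤ 8 * (‖𝓕 (fun x => (f x : ℂ)) ξ‖ + ‖𝓕 (fun x => (g x : ℂ)) ξ‖)
        * (exp (-s * t) * (s + t * s ^ 2) + exp (-(1 / 8) * t)) := by
  subst hs
  simpa only [h.init, h.init_time] using
    (h.isDampedOscillator_fourier hf hg ξ).norm_sub_exp_smul_le (by positivity) ht

end IsDampedWave

/-! ### Inverse Fourier transforms and Gaussian multipliers -/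

section FourierInverse

variable {E F : Type*} [NormedAddCommGroup E] [InnerProductSpace ℝ E] [FiniteDimensional ℝ E]
  [MeasurableSpace E] [BorelSpace E] [NormedAddCommGroup F] [NormedSpace ℂ F] {e v : E → F} {t : ℝ}

theorem norm_fourierInv_le_integral_norm (e : E → F) (x : E) : ‖𝓕⁻ e x‖ ≤ ∫ ξ, ‖e ξ‖ := by
  rw [Real.fourierInv_eq]
  exact (norm_integral_le_integral_norm _).trans_eq (by simp only [Circle.norm_smul])

theorem continuous_fourier (he : Integrable e) : Continuous (𝓕 e) :=
  VectorFourier.fourierIntegral_continuous (L := innerₗ E) Real.continuous_fourierChar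
    continuous_inner he

theorem integrable_fourierChar_inner_smul (he : Integrable e) (x : E) :
    Integrable fun ξ => 𝐞 ⟪ξ, x⟫_ℝ • e ξ := by
  simpa using (Real.fourierIntegral_convergent_iff (-x)).2 he

theorem norm_fourierChar_sub_fourierChar_le (a c : ℝ) :
    ‖(𝐞 a : ℂ) - 𝐞 c‖ ≤ 2 * π * |a - c| := by
  have hfactor : (𝐞 a : ℂ) - 𝐞 c = 𝐞 c * (Complex.exp (Complex.I * ↑(2 * π * (a - c))) - 1) := by
    rw [mul_sub_one, Real.fourierChar_apply, Real.fourierChar_apply, ← Complex.exp_add]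
    congr 2
    push_cast
    ring
  calc ‖(𝐞 a : ℂ) - 𝐞 c‖ ≤ ‖2 * π * (a - c)‖ := by
        rw [hfactor, norm_mul, Circle.norm_coe, one_mul]
        exact norm_exp_I_mul_ofReal_sub_one_le
    _ = 2 * π * |a - c| := by rw [norm_mul, norm_of_nonneg (by positivity), norm_eq_abs]

theorem norm_fourierInv_sub_fourierInv_le (he : Integrable e)
    (he' : Integrable fun ξ => ‖ξ‖ * ‖e ξ‖) (x y : E) :
    ‖𝓕⁻ e x - 𝓕⁻ e y‖ ≤ 2 * π * ‖x - y‖ * ∫ ξ, ‖ξ‖ * ‖e ξ‖ := by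
  rw [Real.fourierInv_eq, Real.fourierInv_eq, ← integral_sub
    (integrable_fourierChar_inner_smul he x) (integrable_fourierChar_inner_smul he y),
    ← integral_const_mul]
  refine norm_integral_le_of_norm_le (he'.const_mul _) (Eventually.of_forall fun ξ => ?_)
  calc ‖𝐞 ⟪ξ, x⟫_ℝ • e ξ - 𝐞 ⟪ξ, y⟫_ℝ • e ξ‖
      = ‖(𝐞 ⟪ξ, x⟫_ℝ : ℂ) - 𝐞 ⟪ξ, y⟫_ℝ‖ * ‖e ξ‖ := by
        rw [Circle.smul_def, Circle.smul_def, ← sub_smul, norm_smul]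
    _ ≤ 2 * π * |⟪ξ, x⟫_ℝ - ⟪ξ, y⟫_ℝ| * ‖e ξ‖ := by
        gcongr
        exact norm_fourierChar_sub_fourierChar_le _ _
    _ ≤ 2 * π * (‖ξ‖ * ‖x - y‖) * ‖e ξ‖ := by
        rw [← inner_sub_right]
        gcongr
        exact abs_real_inner_le_norm ξ (x - y)
    _ = 2 * π * ‖x - y‖ * (‖ξ‖ * ‖e ξ‖) := by ring

end FourierInverse

/-- The heat evolution of `v` at time `t`, without the normalising factor `(4πt)^(-d/2)`. -/
def heatIntegral {E F : Type*} [NormedAddCommGroup E] [MeasureSpace E] [NormedAddCommGroup F]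
    [NormedSpace ℝ F] (v : E → F) (t : ℝ) (x : E) : F :=
  ∫ y, exp (-‖x - y‖ ^ 2 / (4 * t)) • v y

section HeatFlow

variable {E F : Type*} [NormedAddCommGroup E] [InnerProductSpace ℝ E] [FiniteDimensional ℝ E]
  [MeasurableSpace E] [BorelSpace E] [NormedAddCommGroup F] [NormedSpace ℂ F] {v w : E → F} {t : ℝ}

theorem integrable_exp_neg_mul_sq_norm {b : ℝ} (hb : 0 < b) :
    Integrable fun ξ : E => exp (-b * ‖ξ‖ ^ 2) := by
  refine Integrable.of_integral_ne_zero ?_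
  rw [GaussianFourier.integral_rexp_neg_mul_sq_norm hb]
  positivity

theorem integrable_pow_mul_exp_neg_mul_sq_norm {b : ℝ} (hb : 0 < b) (k : ℕ) :
    Integrable fun ξ : E => ‖ξ‖ ^ k * exp (-b * ‖ξ‖ ^ 2) := by
  refine ((integrable_exp_neg_mul_sq_norm (half_pos hb)).const_mul
    (k.factorial * exp (1 / (2 * b)))).mono' (by fun_prop) (Eventually.of_forall fun ξ => ?_)
  have hpow : ‖ξ‖ ^ k ≤ k.factorial * exp ‖ξ‖ :=
    (div_le_iff₀' (by positivity)).1 (pow_div_factorial_le_exp _ (norm_nonneg ξ) k)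
  have hsquare : ‖ξ‖ + -b * ‖ξ‖ ^ 2 ≤ 1 / (2 * b) + -(b / 2) * ‖ξ‖ ^ 2 := by
    have : 0 ≤ (b * ‖ξ‖ - 1) ^ 2 / (2 * b) := by positivity
    have hexpand : (b * ‖ξ‖ - 1) ^ 2 / (2 * b) = b / 2 * ‖ξ‖ ^ 2 - ‖ξ‖ + 1 / (2 * b) := by
      field_simp
      ring
    linarith
  calc ‖‖ξ‖ ^ k * exp (-b * ‖ξ‖ ^ 2)‖ = ‖ξ‖ ^ k * exp (-b * ‖ξ‖ ^ 2) :=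
        norm_of_nonneg (by positivity)
    _ ≤ k.factorial * exp ‖ξ‖ * exp (-b * ‖ξ‖ ^ 2) := by gcongr
    _ = k.factorial * exp (‖ξ‖ + -b * ‖ξ‖ ^ 2) := by rw [exp_add, mul_assoc]
    _ ≤ k.factorial * exp (1 / (2 * b) + -(b / 2) * ‖ξ‖ ^ 2) := by gcongr
    _ = k.factorial * exp (1 / (2 * b)) * exp (-(b / 2) * ‖ξ‖ ^ 2) := by rw [exp_add, mul_assoc]

theorem fourier_modulated_gaussian (ht : 0 < t) (x y : E) :
    𝓕 (fun ξ => Complex.exp (-(4 * π ^ 2 * t : ℝ) * ‖ξ‖ ^ 2 + 2 * π * Complex.I * ⟪x, ξ⟫_ℝ)) y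
      = ((√(4 * π * t) ^ Module.finrank ℝ E)⁻¹ * exp (-‖x - y‖ ^ 2 / (4 * t)) : ℝ) := by
  have hre : 0 < ((4 * π ^ 2 * t : ℝ) : ℂ).re := by
    rw [Complex.ofReal_re]
    positivity
  have hbase : (π : ℂ) / (4 * π ^ 2 * t : ℝ) = ((4 * π * t)⁻¹ : ℝ) := by
    rw [← Complex.ofReal_div]
    congr 1
    field_simp
  have hexponent : -(π : ℂ) ^ 2 * ‖x - y‖ ^ 2 / (4 * π ^ 2 * t : ℝ)
      = (-‖x - y‖ ^ 2 / (4 * t) : ℝ) := by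
    push_cast
    field_simp
  have hpow : ((4 * π * t)⁻¹ : ℝ) ^ ((Module.finrank ℝ E : ℝ) / 2)
      = (√(4 * π * t) ^ Module.finrank ℝ E)⁻¹ := by
    rw [rpow_div_two_eq_sqrt _ (by positivity), rpow_natCast, sqrt_inv, inv_pow]
  rw [fourier_gaussian_innerProductSpace' hre, hbase, hexponent, Complex.ofReal_mul, ← hpow,
    Complex.ofReal_cpow (by positivity), Complex.ofReal_exp]
  push_cast
  rfl

theorem fourierInv_gaussian_smul_fourier [CompleteSpace F] (hv : Integrable v) (ht : 0 < t)
    (x : E) :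
    𝓕⁻ (fun ξ => exp (-(4 * π ^ 2 * ‖ξ‖ ^ 2) * t) • 𝓕 v ξ) x
      = (√(4 * π * t) ^ Module.finrank ℝ E)⁻¹ • heatIntegral v t x := by
  have hgauss : Integrable fun ξ : E =>
      Complex.exp (-(4 * π ^ 2 * t : ℝ) * ‖ξ‖ ^ 2 + 2 * π * Complex.I * ⟪x, ξ⟫_ℝ) :=
    GaussianFourier.integrable_cexp_neg_mul_sq_norm_add
      (by rw [Complex.ofReal_re]; positivity) _ _
  have hflip : ∫ ξ,
        Complex.exp (-(4 * π ^ 2 * t : ℝ) * ‖ξ‖ ^ 2 + 2 * π * Complex.I * ⟪x, ξ⟫_ℝ) • 𝓕 v ξ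
      = ∫ y, 𝓕 (fun ξ =>
          Complex.exp (-(4 * π ^ 2 * t : ℝ) * ‖ξ‖ ^ 2 + 2 * π * Complex.I * ⟪x, ξ⟫_ℝ)) y • v y := by
    have := VectorFourier.integral_fourierIntegral_smul_eq_flip (L := innerₗ E)
      Real.continuous_fourierChar continuous_inner hgauss hv
    rw [flip_innerₗ] at this
    exact this.symm
  have hmultiplier (ξ : E) : 𝐞 ⟪ξ, x⟫_ℝ • exp (-(4 * π ^ 2 * ‖ξ‖ ^ 2) * t) • 𝓕 v ξ
      = Complex.exp (-(4 * π ^ 2 * t : ℝ) * ‖ξ‖ ^ 2 + 2 * π * Complex.I * ⟪x, ξ⟫_ℝ) • 𝓕 v ξ := by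
    rw [Circle.smul_def, Real.fourierChar_apply, ← Complex.coe_smul, smul_smul,
      Complex.ofReal_exp, ← Complex.exp_add, real_inner_comm]
    congr 2
    push_cast
    ring
  simp only [Real.fourierInv_eq, hmultiplier, hflip, fourier_modulated_gaussian ht,
    Complex.coe_smul, mul_smul, integral_smul, heatIntegral]

theorem fourierInv_sub_gaussian_smul_fourier [CompleteSpace F] (hw : Continuous w)
    (hwi : Integrable w) (hv : Integrable v) (ht : 0 < t)
    (he : Integrable fun ξ => 𝓕 w ξ - exp (-(4 * π ^ 2 * ‖ξ‖ ^ 2) * t) • 𝓕 v ξ) (x : E) :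
    𝓕⁻ (fun ξ => 𝓕 w ξ - exp (-(4 * π ^ 2 * ‖ξ‖ ^ 2) * t) • 𝓕 v ξ) x
      = w x - (√(4 * π * t) ^ Module.finrank ℝ E)⁻¹ • heatIntegral v t x := by
  have hm : Integrable fun ξ => exp (-(4 * π ^ 2 * ‖ξ‖ ^ 2) * t) • 𝓕 v ξ := by
    have hgauss : Integrable fun ξ : E => exp (-(4 * π ^ 2 * ‖ξ‖ ^ 2) * t) :=
      (integrable_exp_neg_mul_sq_norm (b := 4 * π ^ 2 * t) (by positivity)).congr
        (Eventually.of_forall fun ξ => by ring_nf)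
    exact hgauss.smul_bdd (∫ y, ‖v y‖) (continuous_fourier hv).aestronglyMeasurable
      (Eventually.of_forall fun ξ =>
        VectorFourier.norm_fourierIntegral_le_integral_norm _ _ _ _ _)
  have hw' : Integrable (𝓕 w) :=
    (he.add hm).congr (Eventually.of_forall fun ξ => sub_add_cancel _ _)
  rw [← fourierInv_gaussian_smul_fourier hv ht, ← congrFun (hw.fourierInv_fourier_eq hwi hw') x]
  simp only [Real.fourierInv_eq, smul_sub]
  exact integral_sub (integrable_fourierChar_inner_smul hw' x)
    (integrable_fourierChar_inner_smul hm x)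

end HeatFlow

/-! ### The diffusion phenomenon -/

section Moments

variable {E F : Type*} [NormedAddCommGroup E] [InnerProductSpace ℝ E] [FiniteDimensional ℝ E]
  [MeasurableSpace E] [BorelSpace E] [NormedAddCommGroup F] {t : ℝ}

theorem integral_pow_mul_comp_mul_sq_norm (p : ℝ → ℝ) (k : ℕ) (ht : 0 < t) :
    ∫ ξ : E, ‖ξ‖ ^ k * p (t * ‖ξ‖ ^ 2)
      = (√t ^ (Module.finrank ℝ E + k))⁻¹ * ∫ ξ : E, ‖ξ‖ ^ k * p (‖ξ‖ ^ 2) := by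
  have hsqrt : 0 < √t := sqrt_pos.2 ht
  have hscale (ξ : E) : ‖ξ‖ ^ k * p (t * ‖ξ‖ ^ 2)
      = (√t ^ k)⁻¹ * (‖√t • ξ‖ ^ k * p (‖√t • ξ‖ ^ 2)) := by
    rw [norm_smul, norm_of_nonneg hsqrt.le, mul_pow, mul_pow, sq_sqrt ht.le]
    field_simp
  simp only [hscale, integral_const_mul]
  rw [Measure.integral_comp_smul_of_nonneg volume
    (fun ξ : E => ‖ξ‖ ^ k * p (‖ξ‖ ^ 2)) _ (hR := hsqrt.le), smul_eq_mul, pow_add, mul_inv]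
  ring

/-- The profile of the low-frequency error of the diffusion approximation: at frequency `ξ` and
time `t` the relative error is `t⁻¹ * diffusionProfile (t * ‖ξ‖ ^ 2)`. -/
def diffusionProfile (r : ℝ) : ℝ :=
  exp (-(4 * π ^ 2) * r) * (4 * π ^ 2 * r + (4 * π ^ 2 * r) ^ 2)

theorem diffusionProfile_nonneg {r : ℝ} (hr : 0 ≤ r) : 0 ≤ diffusionProfile r := by
  unfold diffusionProfile
  positivity

theorem inv_mul_diffusionProfile (ht : t ≠ 0) (a : ℝ) :
    t⁻¹ * diffusionProfile (t * a ^ 2)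
      = exp (-(4 * π ^ 2 * a ^ 2) * t) * (4 * π ^ 2 * a ^ 2 + t * (4 * π ^ 2 * a ^ 2) ^ 2) := by
  rw [diffusionProfile, show -(4 * π ^ 2) * (t * a ^ 2) = -(4 * π ^ 2 * a ^ 2) * t by ring]
  field_simp

theorem integrable_pow_mul_diffusionProfile (k : ℕ) (ht : 0 < t) :
    Integrable fun ξ : E => ‖ξ‖ ^ k * diffusionProfile (t * ‖ξ‖ ^ 2) := by
  have hb : 0 < 4 * π ^ 2 * t := by positivity
  refine (((integrable_pow_mul_exp_neg_mul_sq_norm hb (k + 2)).const_mul (4 * π ^ 2 * t)).add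
    ((integrable_pow_mul_exp_neg_mul_sq_norm hb (k + 4)).const_mul ((4 * π ^ 2 * t) ^ 2))).congr
    (Eventually.of_forall fun ξ => ?_)
  simp only [diffusionProfile, Pi.add_apply]
  ring_nf

variable {e : E → F} {A : E → ℝ} {M : ℝ} {k : ℕ}

theorem integrable_and_integral_pow_mul_norm_le (ht : 0 < t) (he : AEStronglyMeasurable e)
    (hAM : ∀ ξ, A ξ ≤ M) (hA : Integrable fun ξ => ‖ξ‖ ^ k * A ξ)
    (heA : ∀ ξ, ‖e ξ‖ ≤ A ξ * (t⁻¹ * diffusionProfile (t * ‖ξ‖ ^ 2) + exp (-(1 / 8) * t))) :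
    Integrable (fun ξ => ‖ξ‖ ^ k * ‖e ξ‖) ∧
      ∫ ξ, ‖ξ‖ ^ k * ‖e ξ‖
        ≤ M * (t⁻¹ * ((√t ^ (Module.finrank ℝ E + k))⁻¹ *
            ∫ ξ : E, ‖ξ‖ ^ k * diffusionProfile (‖ξ‖ ^ 2)))
          + exp (-(1 / 8) * t) * ∫ ξ, ‖ξ‖ ^ k * A ξ := by
  have hbound (ξ : E) : ‖ξ‖ ^ k * ‖e ξ‖
      ≤ M * (t⁻¹ * (‖ξ‖ ^ k * diffusionProfile (t * ‖ξ‖ ^ 2)))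
        + exp (-(1 / 8) * t) * (‖ξ‖ ^ k * A ξ) := by
    have hp : 0 ≤ diffusionProfile (t * ‖ξ‖ ^ 2) := diffusionProfile_nonneg (by positivity)
    calc ‖ξ‖ ^ k * ‖e ξ‖
        ≤ ‖ξ‖ ^ k * (A ξ * (t⁻¹ * diffusionProfile (t * ‖ξ‖ ^ 2) + exp (-(1 / 8) * t))) := by
          gcongr
          exact heA ξ
      _ = A ξ * (t⁻¹ * (‖ξ‖ ^ k * diffusionProfile (t * ‖ξ‖ ^ 2)))
          + exp (-(1 / 8) * t) * (‖ξ‖ ^ k * A ξ) := by ring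
      _ ≤ _ := by
          gcongr
          exact hAM ξ
  have hprofile : Integrable fun ξ : E =>
      M * (t⁻¹ * (‖ξ‖ ^ k * diffusionProfile (t * ‖ξ‖ ^ 2))) :=
    ((integrable_pow_mul_diffusionProfile k ht).const_mul _).const_mul _
  have hint : Integrable fun ξ => ‖ξ‖ ^ k * ‖e ξ‖ :=
    (hprofile.add (hA.const_mul _)).mono' (by fun_prop) (Eventually.of_forall fun ξ => by
      simpa only [norm_mul, norm_pow, norm_norm] using! hbound ξ)
  refine ⟨hint, (integral_mono hint (hprofile.add (hA.const_mul _)) hbound).trans_eq ?_⟩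
  rw [integral_add' hprofile (hA.const_mul _), integral_const_mul, integral_const_mul,
    integral_const_mul, integral_pow_mul_comp_mul_sq_norm _ _ ht]

theorem tendsto_sqrt_pow_mul_exp_neg_mul_atTop {a : ℝ} (ha : 0 < a) (m : ℕ) :
    Tendsto (fun t => √t ^ m * exp (-a * t)) atTop (𝓝 0) := by
  refine (tendsto_rpow_mul_exp_neg_mul_atTop_nhds_zero (m / 2) a ha).congr' ?_
  filter_upwards [eventually_ge_atTop 0] with t ht
  rw [rpow_div_two_eq_sqrt _ ht, rpow_natCast]

theorem tendsto_sqrt_pow_mul_integral_pow_mul_norm {e : ℝ → E → F} (hk : k ≤ 1)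
    (he : ∀ t > 0, AEStronglyMeasurable (e t)) (hAM : ∀ ξ, A ξ ≤ M)
    (hA : Integrable fun ξ => ‖ξ‖ ^ k * A ξ)
    (heA : ∀ t > 0, ∀ ξ,
      ‖e t ξ‖ ≤ A ξ * (t⁻¹ * diffusionProfile (t * ‖ξ‖ ^ 2) + exp (-(1 / 8) * t))) :
    Tendsto (fun t => √t ^ (Module.finrank ℝ E + 2 * k) * ∫ ξ, ‖ξ‖ ^ k * ‖e t ξ‖) atTop
      (𝓝 0) := by
  have hlow : Tendsto (fun t => √t ^ k / √t ^ 2) atTop (𝓝 0) :=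
    (tendsto_pow_div_pow_atTop_zero (by lia)).comp tendsto_sqrt_atTop
  have hhigh := tendsto_sqrt_pow_mul_exp_neg_mul_atTop (a := 1 / 8) (by norm_num)
    (Module.finrank ℝ E + 2 * k)
  have hlim := (hlow.const_mul (M * ∫ ξ : E, ‖ξ‖ ^ k * diffusionProfile (‖ξ‖ ^ 2))).add
    (hhigh.mul_const (∫ ξ, ‖ξ‖ ^ k * A ξ))
  rw [mul_zero, zero_mul, add_zero] at hlim
  refine squeeze_zero' (Eventually.of_forall fun t => by positivity) ?_ hlim
  filter_upwards [eventually_gt_atTop 0] with t ht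
  have : 0 < √t := sqrt_pos.2 ht
  refine (mul_le_mul_of_nonneg_left (integrable_and_integral_pow_mul_norm_le ht (he t ht) hAM
    hA (heA t ht)).2 (by positivity)).trans_eq ?_
  rw [sq_sqrt ht.le, mul_add, ← mul_assoc (√t ^ _) (exp _)]
  congr 1
  rw [two_mul, ← add_assoc, pow_add]
  field_simp

end Moments

/-- The function `w` on space-time is asymptotic, as `t → ∞`, to the heat integral of `v`, both
uniformly and, at the rate `o(1/t)`, in the Lipschitz seminorm. -/
structure IsAsymptoticToHeat {E : Type*} [NormedAddCommGroup E] [MeasureSpace E]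
    (w : E × ℝ → ℝ) (v : E → ℝ) : Prop where
  abs_sub_le : ∀ ε > 0, ∀ᶠ t in atTop, ∀ x, |w (x, t) - heatIntegral v t x| ≤ ε
  abs_sub_sub_le : ∀ ε > 0, ∀ᶠ t in atTop, ∀ x y,
    |(w (x, t) - heatIntegral v t x) - (w (y, t) - heatIntegral v t y)| ≤ ε / t * ‖x - y‖

/-- The Fourier transform of `w` minus that of the heat flow of `v` at time `t`. -/
def heatDefect {E : Type*} [NormedAddCommGroup E] [InnerProductSpace ℝ E] [FiniteDimensional ℝ E]
    [MeasurableSpace E] [BorelSpace E] (w v : E → ℝ) (t : ℝ) (ξ : E) : ℂ :=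
  𝓕 (fun x => (w x : ℂ)) ξ - exp (-(4 * π ^ 2 * ‖ξ‖ ^ 2) * t) • 𝓕 (fun x => (v x : ℂ)) ξ

section HeatDefect

variable {E : Type*} [NormedAddCommGroup E] [InnerProductSpace ℝ E] [FiniteDimensional ℝ E]
  [MeasurableSpace E] [BorelSpace E] {w v : E → ℝ} {t : ℝ}

theorem continuous_heatDefect (hw : Integrable w) (hv : Integrable v) (t : ℝ) :
    Continuous (heatDefect w v t) := by
  have hw' := continuous_fourier (hw.ofReal (𝕜 := ℂ))
  have hv' := continuous_fourier (hv.ofReal (𝕜 := ℂ))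
  unfold heatDefect
  fun_prop

theorem fourierInv_heatDefect (hw : Continuous w) (hwi : Integrable w) (hv : Integrable v)
    (ht : 0 < t) (he : Integrable (heatDefect w v t)) (x : E) :
    √(4 * π * t) ^ Module.finrank ℝ E • 𝓕⁻ (heatDefect w v t) x
      = (√(4 * π * t) ^ Module.finrank ℝ E * w x - heatIntegral v t x : ℝ) := by
  have hsqrt : √(4 * π * t) ^ Module.finrank ℝ E ≠ 0 := by positivity
  have hinv : 𝓕⁻ (heatDefect w v t) x = (w x : ℂ)
      - (√(4 * π * t) ^ Module.finrank ℝ E)⁻¹ • heatIntegral (fun y => (v y : ℂ)) t x :=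
    fourierInv_sub_gaussian_smul_fourier (Complex.continuous_ofReal.comp hw)
      (hwi.ofReal (𝕜 := ℂ)) (hv.ofReal (𝕜 := ℂ)) ht he x
  have hheat : heatIntegral (fun y => (v y : ℂ)) t x = (heatIntegral v t x : ℝ) := by
    simp only [heatIntegral, ← integral_complex_ofReal, smul_eq_mul, Complex.ofReal_mul,
      Complex.real_smul]
  rw [hinv, hheat, smul_sub, smul_inv_smul₀ hsqrt, Complex.ofReal_sub, Complex.ofReal_mul,
    Complex.real_smul]

theorem abs_sub_heatIntegral_le (hw : Continuous w) (hwi : Integrable w) (hv : Integrable v)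
    (ht : 0 < t) (he : Integrable (heatDefect w v t)) (x : E) :
    |√(4 * π * t) ^ Module.finrank ℝ E * w x - heatIntegral v t x|
      ≤ √(4 * π * t) ^ Module.finrank ℝ E * ∫ ξ, ‖heatDefect w v t ξ‖ := by
  rw [← norm_eq_abs, ← Complex.norm_real, ← fourierInv_heatDefect hw hwi hv ht he, norm_smul,
    norm_of_nonneg (by positivity)]
  gcongr
  exact norm_fourierInv_le_integral_norm _ x

theorem abs_sub_heatIntegral_sub_le (hw : Continuous w) (hwi : Integrable w) (hv : Integrable v)
    (ht : 0 < t) (he : Integrable (heatDefect w v t))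
    (he' : Integrable fun ξ => ‖ξ‖ * ‖heatDefect w v t ξ‖) (x y : E) :
    |(√(4 * π * t) ^ Module.finrank ℝ E * w x - heatIntegral v t x)
        - (√(4 * π * t) ^ Module.finrank ℝ E * w y - heatIntegral v t y)|
      ≤ √(4 * π * t) ^ Module.finrank ℝ E
        * (2 * π * ‖x - y‖ * ∫ ξ, ‖ξ‖ * ‖heatDefect w v t ξ‖) := by
  rw [← norm_eq_abs, ← Complex.norm_real, Complex.ofReal_sub,
    ← fourierInv_heatDefect hw hwi hv ht he, ← fourierInv_heatDefect hw hwi hv ht he, ← smul_sub,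
    norm_smul, norm_of_nonneg (by positivity)]
  gcongr
  exact norm_fourierInv_sub_fourierInv_le he he' x y

end HeatDefect

section Asymptotics

variable {E : Type*} [NormedAddCommGroup E] [InnerProductSpace ℝ E] [FiniteDimensional ℝ E]
  [MeasurableSpace E] [BorelSpace E]

theorem isAsymptoticToHeat_of_norm_heatDefect_le {u : E × ℝ → ℝ} {v A : E → ℝ} {M : ℝ}
    (hu : ∀ t > 0, Continuous fun x => u (x, t)) (hui : ∀ t > 0, Integrable fun x => u (x, t))
    (hv : Integrable v) (hAM : ∀ ξ, A ξ ≤ M)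
    (hA : ∀ k ≤ 1, Integrable fun ξ => ‖ξ‖ ^ k * A ξ)
    (hdefect : ∀ t > 0, ∀ ξ, ‖heatDefect (fun x => u (x, t)) v t ξ‖
      ≤ A ξ * (t⁻¹ * diffusionProfile (t * ‖ξ‖ ^ 2) + exp (-(1 / 8) * t))) :
    IsAsymptoticToHeat (fun p => √(4 * π * p.2) ^ Module.finrank ℝ E * u p) v := by
  set d := Module.finrank ℝ E
  let e (t : ℝ) : E → ℂ := heatDefect (fun x => u (x, t)) v t
  have hmeas (t) (ht : t > 0) : AEStronglyMeasurable (e t) :=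
    (continuous_heatDefect (hui t ht) hv t).aestronglyMeasurable
  have hmoment (k) (hk : k ≤ 1) (t) (ht : t > 0) : Integrable fun ξ => ‖ξ‖ ^ k * ‖e t ξ‖ :=
    (integrable_and_integral_pow_mul_norm_le ht (hmeas t ht) hAM (hA k hk) (hdefect t ht)).1
  have hint (t) (ht : t > 0) : Integrable (e t) :=
    (integrable_norm_iff (hmeas t ht)).1 (by simpa using hmoment 0 zero_le_one t ht)
  have hlim (k) (hk : k ≤ 1) : Tendsto (fun t => √t ^ (d + 2 * k) * ∫ ξ, ‖ξ‖ ^ k * ‖e t ξ‖)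
      atTop (𝓝 0) :=
    tendsto_sqrt_pow_mul_integral_pow_mul_norm hk hmeas hAM (hA k hk) hdefect
  have hsqrt (t : ℝ) : √(4 * π * t) ^ d = √(4 * π) ^ d * √t ^ d := by
    rw [sqrt_mul (by positivity), mul_pow]
  refine ⟨fun ε hε => ?_, fun ε hε => ?_⟩
  · have hsmall := ((hlim 0 zero_le_one).const_mul (√(4 * π) ^ d)).eventually_le_const
      (by simpa using hε)
    filter_upwards [hsmall, eventually_gt_atTop 0] with t hsmall ht x
    calc |√(4 * π * t) ^ d * u (x, t) - heatIntegral v t x|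
        ≤ √(4 * π * t) ^ d * ∫ ξ, ‖e t ξ‖ :=
          abs_sub_heatIntegral_le (hu t ht) (hui t ht) hv ht (hint t ht) x
      _ = √(4 * π) ^ d * (√t ^ (d + 2 * 0) * ∫ ξ, ‖ξ‖ ^ 0 * ‖e t ξ‖) := by
          simp only [hsqrt, mul_zero, add_zero, pow_zero, one_mul, mul_assoc (√(4 * π) ^ d)]
      _ ≤ ε := hsmall
  · have hsmall := ((hlim 1 le_rfl).const_mul (√(4 * π) ^ d * (2 * π))).eventually_le_const
      (by simpa using hε)
    filter_upwards [hsmall, eventually_gt_atTop 0] with t hsmall ht x y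
    simp only [pow_one] at hsmall
    calc |(√(4 * π * t) ^ d * u (x, t) - heatIntegral v t x)
          - (√(4 * π * t) ^ d * u (y, t) - heatIntegral v t y)|
        ≤ √(4 * π * t) ^ d * (2 * π * ‖x - y‖ * ∫ ξ, ‖ξ‖ * ‖e t ξ‖) :=
          abs_sub_heatIntegral_sub_le (hu t ht) (hui t ht) hv ht (hint t ht)
            (by simpa only [pow_one] using hmoment 1 le_rfl t ht) x y
      _ = √(4 * π) ^ d * (2 * π) * (√t ^ (d + 2 * 1) * ∫ ξ, ‖ξ‖ * ‖e t ξ‖) / t * ‖x - y‖ := by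
          rw [hsqrt, pow_add, mul_one, sq_sqrt ht.le]
          field_simp
      _ ≤ ε / t * ‖x - y‖ := by gcongr

theorem IsDampedWave.isAsymptoticToHeat {ι : Type*} [Fintype ι] {b : OrthonormalBasis ι ℝ E}
    {f g : E → ℝ} {u : E × ℝ → ℝ} {u' : E × ℝ → E × ℝ →L[ℝ] ℝ}
    {u'' : E × ℝ → E × ℝ →L[ℝ] E × ℝ →L[ℝ] ℝ} {R : ℝ} (h : IsDampedWave b f g u u' u'')
    (hf : ∀ x, R < ‖x‖ → f x = 0) (hg : ∀ x, R < ‖x‖ → g x = 0)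
    (hf' : ∀ k ≤ 1, Integrable fun ξ => ‖ξ‖ ^ k * ‖𝓕 (fun x => (f x : ℂ)) ξ‖)
    (hg' : ∀ k ≤ 1, Integrable fun ξ => ‖ξ‖ ^ k * ‖𝓕 (fun x => (g x : ℂ)) ξ‖) :
    IsAsymptoticToHeat (fun p => √(4 * π * p.2) ^ Module.finrank ℝ E * u p) (f + g) := by
  have hfi : Integrable f := by simpa only [h.init] using h.integrable_slice hf hg le_rfl
  have hgi : Integrable g := by
    simpa only [h.init_time] using h.integrable_slice_deriv_time hf hg le_rfl
  have hadd (ξ : E) : 𝓕 (fun x => ((f + g) x : ℂ)) ξ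
      = 𝓕 (fun x => (f x : ℂ)) ξ + 𝓕 (fun x => (g x : ℂ)) ξ := by
    simp only [Real.fourier_eq, Pi.add_apply, Complex.ofReal_add, smul_add]
    exact integral_add ((Real.fourierIntegral_convergent_iff ξ).2 hfi.ofReal)
      ((Real.fourierIntegral_convergent_iff ξ).2 hgi.ofReal)
  have hle (w : E → ℝ) (ξ : E) : ‖𝓕 (fun x => (w x : ℂ)) ξ‖ ≤ ∫ x, ‖w x‖ := by
    simpa only [Complex.norm_real] using!
      VectorFourier.norm_fourierIntegral_le_integral_norm 𝐞 volume _ (fun x => (w x : ℂ)) ξ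
  refine isAsymptoticToHeat_of_norm_heatDefect_le
    (A := fun ξ => 8 * (‖𝓕 (fun x => (f x : ℂ)) ξ‖ + ‖𝓕 (fun x => (g x : ℂ)) ξ‖))
    (M := 8 * ((∫ x, ‖f x‖) + ∫ x, ‖g x‖))
    (fun t ht => continuous_slice_of_continuousOn h.continuousOn ht.le)
    (fun t ht => h.integrable_slice hf hg ht.le) (hfi.add hgi)
    (fun ξ => by gcongr <;> exact hle _ ξ) (fun k hk => ?_) (fun t ht ξ => ?_)
  · refine (((hf' k hk).add (hg' k hk)).const_mul 8).congr (Eventually.of_forall fun ξ => ?_)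
    simp only [Pi.add_apply]
    ring
  · rw [heatDefect, hadd, inv_mul_diffusionProfile ht.ne']
    exact h.norm_fourier_sub_le hf hg ht.le ξ rfl

end Asymptotics

/-! ### Hot spots -/

theorem exists_norm_eq_one_forall_inner_sub_nonneg {E : Type*} [NormedAddCommGroup E]
    [InnerProductSpace ℝ E] [CompleteSpace E] {K : Set E} (hK : Convex ℝ K)
    (hKi : (interior K).Nonempty) {x : E} (hx : x ∉ interior K) :
    ∃ ν : E, ‖ν‖ = 1 ∧ ∀ y ∈ K, 0 ≤ ⟪x - y, ν⟫_ℝ := by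
  obtain ⟨l, hl, hle⟩ := geometric_hahn_banach_of_nonempty_interior_point hK hx hKi
  set ν := (InnerProductSpace.toDual ℝ E).symm l with hν
  have hν0 : ν ≠ 0 := by simpa [hν] using hl
  refine ⟨‖ν‖⁻¹ • ν, norm_smul_inv_norm hν0, fun y hy => ?_⟩
  rw [real_inner_smul_right, real_inner_comm, hν, InnerProductSpace.toDual_symm_apply, map_sub]
  exact mul_nonneg (by positivity) (sub_nonneg.2 (hle y hy))

theorem half_le_inner_sub_of_mem_ball {E : Type*} [NormedAddCommGroup E] [InnerProductSpace ℝ E]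
    {x y y₀ ν : E} {δ : ℝ} (hν : ‖ν‖ = 1) (hδ : ∀ z ∈ ball y₀ δ, 0 ≤ ⟪x - z, ν⟫_ℝ)
    (hy : y ∈ ball y₀ (δ / 2)) : δ / 2 ≤ ⟪x - y, ν⟫_ℝ := by
  have hδ0 : 0 < δ / 2 := pos_of_mem_ball hy
  have hmove : y + (δ / 2) • ν ∈ ball y₀ δ := by
    rw [mem_ball, dist_eq_norm] at hy ⊢
    calc ‖y + (δ / 2) • ν - y₀‖ = ‖(y - y₀) + (δ / 2) • ν‖ := by congr 1; abel
      _ ≤ ‖y - y₀‖ + ‖(δ / 2) • ν‖ := norm_add_le _ _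
      _ < δ := by
        rw [norm_smul, hν, norm_of_nonneg hδ0.le]
        linarith
  have := hδ _ hmove
  rw [← sub_sub, inner_sub_left, real_inner_smul_left, real_inner_self_eq_norm_sq, hν] at this
  linarith

theorem interior_convexHull_tsupport_nonempty {E : Type*} [NormedAddCommGroup E]
    [NormedSpace ℝ E] {v : E → ℝ} (hv : Continuous v) (hne : v ≠ 0) :
    (interior (convexHull ℝ (tsupport v))).Nonempty := by
  obtain ⟨y₀, hy₀⟩ := Function.ne_iff.1 hne
  exact ⟨y₀, interior_maximal ((subset_tsupport v).trans (subset_convexHull ℝ _))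
    hv.isOpen_support hy₀⟩

section HeatIntegral

variable {E : Type*} [NormedAddCommGroup E] [InnerProductSpace ℝ E] [FiniteDimensional ℝ E]
  [MeasurableSpace E] [BorelSpace E] {v : E → ℝ} {t M R : ℝ} {x : E}

theorem integrable_exp_neg_sq_norm_sub_div_mul (hv : Integrable v) (ht : 0 ≤ t) (x : E) :
    Integrable fun y => exp (-‖x - y‖ ^ 2 / (4 * t)) * v y := by
  refine hv.bdd_mul (c := 1) (by fun_prop) (Eventually.of_forall fun y => ?_)
  rw [norm_of_nonneg (exp_pos _).le, exp_le_one_iff, neg_div, neg_nonpos]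
  positivity

theorem heatIntegral_le (hv : Integrable v) (hv0 : 0 ≤ v) (ht : 0 ≤ t)
    (hM : ∀ y ∈ tsupport v, M ≤ ‖x - y‖ ^ 2 / (4 * t)) :
    heatIntegral v t x ≤ exp (-M) * ∫ y, v y := by
  rw [heatIntegral, ← integral_const_mul]
  refine integral_mono (integrable_exp_neg_sq_norm_sub_div_mul hv ht x) (hv.const_mul _)
    fun y => ?_
  by_cases hy : y ∈ tsupport v
  · refine mul_le_mul_of_nonneg_right (exp_le_exp.2 ?_) (hv0 y)
    rw [neg_div]
    exact neg_le_neg (hM y hy)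
  · simp [image_eq_zero_of_notMem_tsupport hy]

theorem le_heatIntegral (hv : Integrable v) (hv0 : 0 ≤ v) (ht : 0 ≤ t)
    (hM : ∀ y ∈ tsupport v, ‖x - y‖ ^ 2 / (4 * t) ≤ M) :
    exp (-M) * ∫ y, v y ≤ heatIntegral v t x := by
  rw [heatIntegral, ← integral_const_mul]
  refine integral_mono (hv.const_mul _) (integrable_exp_neg_sq_norm_sub_div_mul hv ht x)
    fun y => ?_
  by_cases hy : y ∈ tsupport v
  · refine mul_le_mul_of_nonneg_right (exp_le_exp.2 ?_) (hv0 y)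
    rw [neg_div]
    exact neg_le_neg (hM y hy)
  · simp [image_eq_zero_of_notMem_tsupport hy]

theorem integral_div_four_le_heatIntegral_zero_sub (hv : Integrable v) (hv0 : 0 ≤ v)
    (hR : ∀ y ∈ tsupport v, ‖y‖ ≤ R) (ht : 0 < t) (hRt : R ≤ √t) (hx : 2 * √t + R ≤ ‖x‖) :
    (∫ y, v y) / 4 ≤ heatIntegral v t 0 - heatIntegral v t x := by
  have hsq : √t ^ 2 = t := sq_sqrt ht.le
  have hfar : heatIntegral v t x ≤ exp (-1) * ∫ y, v y :=
    heatIntegral_le hv hv0 ht.le fun y hy => by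
      have hxy : 2 * √t ≤ ‖x - y‖ := by linarith [norm_sub_norm_le x y, hR y hy]
      rw [le_div_iff₀ (by positivity)]
      nlinarith [sqrt_nonneg t]
  have hnear : exp (-(1 / 4)) * ∫ y, v y ≤ heatIntegral v t 0 :=
    le_heatIntegral hv hv0 ht.le fun y hy => by
      rw [div_le_iff₀ (by positivity), zero_sub, norm_neg]
      nlinarith [hR y hy, norm_nonneg y]
  have hexp : 1 / 4 ≤ exp (-(1 / 4)) - exp (-1) := by
    linarith [add_one_le_exp (-(1 / 4)), exp_neg_one_lt_half]
  linarith [mul_le_mul_of_nonneg_right hexp (integral_nonneg (μ := volume) hv0)]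

theorem exp_neg_mul_sub_le_exp_neg_sub_sub {a r s : ℝ} (ha : 0 ≤ a) (haM : a ≤ M) (hr : 0 ≤ r)
    (hs : 0 ≤ s) : exp (-M) * r - s ≤ exp (-(a - r + s)) - exp (-a) := by
  calc exp (-M) * r - s ≤ exp (-a) * r - exp (-a) * s := by
        gcongr
        exact mul_le_of_le_one_left hs (exp_le_one_iff.2 (neg_nonpos.2 ha))
    _ = exp (-a) * (r - s + 1) - exp (-a) := by ring
    _ ≤ exp (-a) * exp (r - s) - exp (-a) := by
        gcongr
        exact add_one_le_exp _
    _ = exp (-(a - r + s)) - exp (-a) := by rw [← exp_add]; congr 2; ring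

theorem le_heatIntegral_sub_heatIntegral (hv : Continuous v) (hvc : HasCompactSupport v)
    (hv0 : 0 ≤ v) (ht : 0 < t) {z : E} (hz : ∀ y ∈ tsupport v, 0 ≤ ⟪x - y, z⟫_ℝ)
    (hM : ∀ y ∈ tsupport v, ‖x - y‖ ^ 2 / (4 * t) ≤ M) :
    (2 * exp (-M) * (∫ y, ⟪x - y, z⟫_ℝ * v y) - ‖z‖ ^ 2 * ∫ y, v y) / (4 * t)
      ≤ heatIntegral v t (x - z) - heatIntegral v t x := by
  have hvi : Integrable v := hv.integrable_of_hasCompactSupport hvc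
  have hinner : Integrable fun y => ⟪x - y, z⟫_ℝ * v y :=
    Continuous.integrable_of_hasCompactSupport (by fun_prop) hvc.mul_left
  have hkernel (x : E) := integrable_exp_neg_sq_norm_sub_div_mul hvi ht.le x
  simp only [heatIntegral, smul_eq_mul]
  rw [← integral_sub (hkernel _) (hkernel _), ← integral_const_mul, ← integral_const_mul,
    ← integral_sub (hinner.const_mul _) (hvi.const_mul _), ← integral_div]
  refine integral_mono (((hinner.const_mul _).sub (hvi.const_mul _)).div_const _)
    ((hkernel _).sub (hkernel _)) fun y => ?_
  by_cases hy : y ∈ tsupport v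
  · have hpoint := exp_neg_mul_sub_le_exp_neg_sub_sub (by positivity) (hM y hy)
      (show 0 ≤ 2 * ⟪x - y, z⟫_ℝ / (4 * t) from
        div_nonneg (mul_nonneg zero_le_two (hz y hy)) (by positivity))
      (show 0 ≤ ‖z‖ ^ 2 / (4 * t) by positivity)
    have hsq : ‖x - y‖ ^ 2 / (4 * t) - 2 * ⟪x - y, z⟫_ℝ / (4 * t) + ‖z‖ ^ 2 / (4 * t)
        = ‖x - z - y‖ ^ 2 / (4 * t) := by
      rw [sub_right_comm x z y, norm_sub_sq_real (x - y)]
      ring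
    rw [hsq] at hpoint
    simp only [neg_div, ← sub_mul]
    calc _ = (exp (-M) * (2 * ⟪x - y, z⟫_ℝ / (4 * t)) - ‖z‖ ^ 2 / (4 * t)) * v y := by ring
      _ ≤ _ := mul_le_mul_of_nonneg_right hpoint (hv0 y)
  · simp [image_eq_zero_of_notMem_tsupport hy]

theorem exists_pos_le_integral_inner_mul (hv : Continuous v) (hvc : HasCompactSupport v)
    (hv0 : 0 ≤ v) (hne : v ≠ 0) :
    ∃ c > 0, ∀ x ν : E, ‖ν‖ = 1 → (∀ y ∈ tsupport v, 0 ≤ ⟪x - y, ν⟫_ℝ) →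
      c ≤ ∫ y, ⟪x - y, ν⟫_ℝ * v y := by
  obtain ⟨y₀, hy₀⟩ := Function.ne_iff.1 hne
  have hpos : 0 < v y₀ := (hv0 y₀).lt_of_ne' hy₀
  obtain ⟨δ, hδ, hball⟩ := Metric.isOpen_iff.1 (isOpen_lt continuous_const hv) y₀
    (half_lt_self hpos)
  have hmem (y) (hy : y ∈ ball y₀ δ) : y ∈ tsupport v :=
    subset_tsupport v (Function.mem_support.2 ((half_pos hpos).trans (hball hy)).ne')
  have hvol : 0 < volume.real (ball y₀ (δ / 2)) :=
    ENNReal.toReal_pos (measure_ball_pos volume y₀ (half_pos hδ)).ne' measure_ball_lt_top.ne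
  refine ⟨δ / 2 * (v y₀ / 2) * volume.real (ball y₀ (δ / 2)), by positivity, fun x ν hν hx => ?_⟩
  have hint : Integrable fun y => ⟪x - y, ν⟫_ℝ * v y :=
    Continuous.integrable_of_hasCompactSupport (by fun_prop) hvc.mul_left
  have hnonneg (y) : 0 ≤ ⟪x - y, ν⟫_ℝ * v y := by
    by_cases hy : y ∈ tsupport v
    · exact mul_nonneg (hx y hy) (hv0 y)
    · simp [image_eq_zero_of_notMem_tsupport hy]
  refine le_trans ?_ (setIntegral_le_integral (s := ball y₀ (δ / 2)) hint
    (Eventually.of_forall hnonneg))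
  refine setIntegral_ge_of_const_le_real measurableSet_ball measure_ball_lt_top.ne
    (fun y hy => ?_) hint.integrableOn
  have hinner : δ / 2 ≤ ⟪x - y, ν⟫_ℝ :=
    half_le_inner_sub_of_mem_ball hν (fun z hz => hx z (hmem z hz)) hy
  have hv_half : v y₀ / 2 ≤ v y := (hball (ball_subset_ball (half_le_self hδ.le) hy)).le
  gcongr
  exact (half_pos hδ).le.trans hinner

theorem integral_pos_of_hasCompactSupport_of_ne_zero (hv : Continuous v) (hvc : HasCompactSupport v)
    (hv0 : 0 ≤ v) (hne : v ≠ 0) : 0 < ∫ y, v y := by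
  obtain ⟨y₀, hy₀⟩ := Function.ne_iff.1 hne
  exact hv.integral_pos_of_hasCompactSupport_nonneg_nonzero hvc hv0 hy₀

theorem exists_pos_forall_exists_le_heatIntegral_sub (hv : Continuous v)
    (hvc : HasCompactSupport v) (hv0 : 0 ≤ v) (hne : v ≠ 0) (M : ℝ) :
    ∃ κ > 0, ∀ t > 0, ∀ x ∉ interior (convexHull ℝ (tsupport v)),
      (∀ y ∈ tsupport v, ‖x - y‖ ^ 2 / (4 * t) ≤ M) →
      ∃ z ≠ x, κ / t * ‖x - z‖ ≤ heatIntegral v t z - heatIntegral v t x := by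
  obtain ⟨c, hc, hcle⟩ := exists_pos_le_integral_inner_mul hv hvc hv0 hne
  have hI := integral_pos_of_hasCompactSupport_of_ne_zero hv hvc hv0 hne
  set I := ∫ y, v y
  -- maximises `2 * ρ * exp (-M) * c - ρ ^ 2 * I`
  set ρ := exp (-M) * c / I with hρ
  have hρ0 : 0 < ρ := by positivity
  refine ⟨exp (-M) * c / 4, by positivity, fun t ht x hx hxM => ?_⟩
  obtain ⟨ν, hν, hsupp⟩ := exists_norm_eq_one_forall_inner_sub_nonneg
    (convex_convexHull ℝ (tsupport v)) (interior_convexHull_tsupport_nonempty hv hne) hx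
  have hsupp' (y) (hy : y ∈ tsupport v) : 0 ≤ ⟪x - y, ν⟫_ℝ := hsupp y (subset_convexHull ℝ _ hy)
  have hnorm : ‖ρ • ν‖ = ρ := by rw [norm_smul, hν, mul_one, norm_of_nonneg hρ0.le]
  have hne_x : x - ρ • ν ≠ x := by
    rw [Ne, sub_eq_self, ← norm_eq_zero, hnorm]
    exact hρ0.ne'
  have hgain := le_heatIntegral_sub_heatIntegral hv hvc hv0 ht (z := ρ • ν)
    (fun y hy => by
      rw [real_inner_smul_right]
      exact mul_nonneg hρ0.le (hsupp' y hy)) hxM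
  simp only [real_inner_smul_right, mul_assoc ρ, integral_const_mul, hnorm] at hgain
  refine ⟨x - ρ • ν, hne_x, le_trans ?_ hgain⟩
  calc exp (-M) * c / 4 / t * ‖x - (x - ρ • ν)‖
      = (2 * exp (-M) * (ρ * c) - ρ ^ 2 * I) / (4 * t) := by
        rw [sub_sub_cancel, hnorm, hρ]
        field_simp
        ring
    _ ≤ _ := by gcongr; exact hcle x ν hν hsupp'

end HeatIntegral

section HotSpots

variable {E : Type*} [NormedAddCommGroup E] [InnerProductSpace ℝ E] [FiniteDimensional ℝ E]
  [MeasurableSpace E] [BorelSpace E] {v : E → ℝ} {w : E × ℝ → ℝ}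

theorem IsAsymptoticToHeat.eventually_exists_lt_of_norm_le (h : IsAsymptoticToHeat w v)
    (hv : Continuous v) (hvc : HasCompactSupport v) (hv0 : 0 ≤ v) (hne : v ≠ 0) {R : ℝ}
    (hR : ∀ y ∈ tsupport v, ‖y‖ ≤ R) :
    ∀ᶠ t in atTop, ∀ x ∉ interior (convexHull ℝ (tsupport v)), ‖x‖ ≤ 2 * √t + R →
      ∃ z, w (x, t) < w (z, t) := by
  obtain ⟨κ, hκ, hgain⟩ := exists_pos_forall_exists_le_heatIntegral_sub hv hvc hv0 hne 4
  filter_upwards [h.abs_sub_sub_le (κ / 2) (half_pos hκ), eventually_gt_atTop 0,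
    tendsto_sqrt_atTop.eventually_ge_atTop R] with t herror ht hRt x hx hxR
  have hnear (y) (hy : y ∈ tsupport v) : ‖x - y‖ ^ 2 / (4 * t) ≤ 4 := by
    have hxy : ‖x - y‖ ≤ 4 * √t := by linarith [norm_sub_le x y, hR y hy]
    rw [div_le_iff₀ (by positivity)]
    nlinarith [norm_nonneg (x - y), sq_sqrt ht.le]
  obtain ⟨z, hzx, hz⟩ := hgain t ht x hx hnear
  have hdist : 0 < ‖x - z‖ := norm_sub_pos_iff.2 hzx.symm
  have hlt : κ / 2 / t * ‖x - z‖ < κ / t * ‖x - z‖ := by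
    gcongr
    exact half_lt_self hκ
  exact ⟨z, by linarith [(abs_le.1 (herror x z)).2]⟩

theorem IsAsymptoticToHeat.eventually_exists_lt_of_le_norm (h : IsAsymptoticToHeat w v)
    (hv : Continuous v) (hvc : HasCompactSupport v) (hv0 : 0 ≤ v) (hne : v ≠ 0) {R : ℝ}
    (hR : ∀ y ∈ tsupport v, ‖y‖ ≤ R) :
    ∀ᶠ t in atTop, ∀ x, 2 * √t + R ≤ ‖x‖ → ∃ z, w (x, t) < w (z, t) := by
  have hI := integral_pos_of_hasCompactSupport_of_ne_zero hv hvc hv0 hne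
  filter_upwards [h.abs_sub_le ((∫ y, v y) / 16) (by positivity), eventually_gt_atTop 0,
    tendsto_sqrt_atTop.eventually_ge_atTop R] with t herror ht hRt x hx
  have hgain := integral_div_four_le_heatIntegral_zero_sub
    (hv.integrable_of_hasCompactSupport hvc) hv0 hR ht hRt hx
  exact ⟨0, by linarith [(abs_le.1 (herror x)).2, (abs_le.1 (herror 0)).1]⟩

theorem IsAsymptoticToHeat.eventually_exists_lt (h : IsAsymptoticToHeat w v) (hv : Continuous v)
    (hvc : HasCompactSupport v) (hv0 : 0 ≤ v) (hne : v ≠ 0) :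
    ∀ᶠ t in atTop, ∀ x ∉ interior (convexHull ℝ (tsupport v)), ∃ z, w (x, t) < w (z, t) := by
  obtain ⟨R, hR⟩ := hvc.isCompact.isBounded.exists_norm_le
  filter_upwards [h.eventually_exists_lt_of_norm_le hv hvc hv0 hne hR,
    h.eventually_exists_lt_of_le_norm hv hvc hv0 hne hR] with t hnear hfar x hx
  exact (le_total ‖x‖ (2 * √t + R)).elim (hnear x hx) (hfar x)

end HotSpots

theorem integrable_pow_mul_norm_fourier {E : Type*} [NormedAddCommGroup E] [InnerProductSpace ℝ E]
    [FiniteDimensional ℝ E] [MeasurableSpace E] [BorelSpace E] {f : E → ℝ}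
    (hf : ContDiff ℝ (⊤ : ℕ∞) f) (hfc : HasCompactSupport f) (k : ℕ) :
    Integrable fun ξ => ‖ξ‖ ^ k * ‖𝓕 (fun x => (f x : ℂ)) ξ‖ := by
  have hfc' : HasCompactSupport fun x => (f x : ℂ) := hfc.comp_left Complex.ofReal_zero
  have hf' : ContDiff ℝ (⊤ : ℕ∞) fun x => (f x : ℂ) := Complex.ofRealCLM.contDiff.comp hf
  exact (𝓕 (hfc'.toSchwartzMap hf')).integrable_pow_mul volume k

theorem IsDampedWave.eventually_exists_lt {E ι : Type*} [NormedAddCommGroup E]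
    [InnerProductSpace ℝ E] [FiniteDimensional ℝ E] [MeasurableSpace E] [BorelSpace E] [Fintype ι]
    {b : OrthonormalBasis ι ℝ E} {f g : E → ℝ} {u : E × ℝ → ℝ} {u' : E × ℝ → E × ℝ →L[ℝ] ℝ}
    {u'' : E × ℝ → E × ℝ →L[ℝ] E × ℝ →L[ℝ] ℝ} (h : IsDampedWave b f g u u' u'')
    (hfc : HasCompactSupport f) (hgc : HasCompactSupport g)
    (hf : ∀ k ≤ 1, Integrable fun ξ => ‖ξ‖ ^ k * ‖𝓕 (fun x => (f x : ℂ)) ξ‖)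
    (hg : ∀ k ≤ 1, Integrable fun ξ => ‖ξ‖ ^ k * ‖𝓕 (fun x => (g x : ℂ)) ξ‖)
    (hpos : 0 ≤ f + g) (hne : f + g ≠ 0) :
    ∀ᶠ t in atTop, ∀ x ∉ interior (convexHull ℝ (tsupport (f + g))),
      ∃ z, u (x, t) < u (z, t) := by
  obtain ⟨R, hR⟩ := (hfc.isCompact.union hgc.isCompact).isBounded.exists_norm_le
  have hf0 (x) (hx : R < ‖x‖) : f x = 0 :=
    image_eq_zero_of_notMem_tsupport fun hxf => hx.not_ge (hR x (Or.inl hxf))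
  have hg0 (x) (hx : R < ‖x‖) : g x = 0 :=
    image_eq_zero_of_notMem_tsupport fun hxg => hx.not_ge (hR x (Or.inr hxg))
  have hfcont : Continuous f := by
    simpa only [h.init] using continuous_slice_of_continuousOn h.continuousOn self_mem_Ici
  have hgcont : Continuous g := by
    simpa only [h.init_time] using
      continuous_slice_of_continuousOn (h.continuousOn_deriv_apply (0, 1)) self_mem_Ici
  filter_upwards [(h.isAsymptoticToHeat hf0 hg0 hf hg).eventually_exists_lt (hfcont.add hgcont)
    (hfc.add hgc) hpos hne, eventually_gt_atTop 0] with t hlt ht x hx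
  obtain ⟨z, hz⟩ := hlt x hx
  exact ⟨z, lt_of_mul_lt_mul_left hz (by positivity)⟩

theorem hot_spots_in_convex_hull_general (n : ℕ) (f g : EuclideanSpace ℝ (Fin n) → ℝ)
    (hf : ∀ k ≤ 1, Integrable fun ξ => ‖ξ‖ ^ k * ‖𝓕 (fun x => (f x : ℂ)) ξ‖)
    (hg : ∀ k ≤ 1, Integrable fun ξ => ‖ξ‖ ^ k * ‖𝓕 (fun x => (g x : ℂ)) ξ‖)
    (hfc : HasCompactSupport f) (hgc : HasCompactSupport g)
    (hne : f + g ≠ 0) (hpos : ∀ x, 0 ≤ f x + g x)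
    (u : EuclideanSpace ℝ (Fin n) → ℝ → ℝ)
    (hreg : ContDiffOn ℝ 2 (fun p : EuclideanSpace ℝ (Fin n) × ℝ => u p.1 p.2) (univ ×ˢ Ici 0))
    (hpde : ∀ x, ∀ t > (0 : ℝ),
      deriv (deriv (fun s => u x s)) t - lap (fun z => u z t) x
        + deriv (fun s => u x s) t = 0)
    (hu0 : ∀ x, u x 0 = f x)
    (hu1 : ∀ x, derivWithin (fun s => u x s) (Ici 0) 0 = g x) :
    ∃ T, max (dsupp (f + g)) (deltaCC (CS (f + g)) (CS f) + dsupp f) ≤ T ∧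
      ∀ t ≥ T, {x : EuclideanSpace ℝ (Fin n) | ∀ ξ, u ξ t ≤ u x t} ⊆ interior (CS (f + g)) := by
  obtain ⟨u', u'', h⟩ := exists_isDampedWave (b := EuclideanSpace.basisFun (Fin n) ℝ) hreg
    (by simpa only [lap, EuclideanSpace.basisFun_apply] using hpde) hu0 hu1
  have hlt := h.eventually_exists_lt hfc hgc hf hg hpos hne
  obtain ⟨T, hTlt⟩ := eventually_atTop.1 hlt
  refine ⟨max (max (dsupp (f + g)) (deltaCC (CS (f + g)) (CS f) + dsupp f)) T, le_max_left _ _,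
    fun t ht x hx => ?_⟩
  by_contra hxCS
  obtain ⟨z, hz⟩ := hTlt t (le_of_max_le_right ht) x hxCS
  exact (hx z).not_gt hz

/-- Theorem `movement` (1). There is
`T ≥ max{d_h, δ(CS(h),CS(f)) + d_f}` such that for all `t ≥ T` the set of time-delayed
hot spots `ℋ(t) = {x : u(x,t) = max_ξ u(ξ,t)}` is contained in `CS(h)`, `h = f + g`. -/
theorem hot_spots_in_convex_hull (n : ℕ) (hn : 1 ≤ n)
    (f g : EuclideanSpace ℝ (Fin n) → ℝ)
    (hf : ContDiff ℝ (⊤ : ℕ∞) f) (hg : ContDiff ℝ (⊤ : ℕ∞) g)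
    (hfc : HasCompactSupport f) (hgc : HasCompactSupport g)
    (hne : f + g ≠ 0) (hpos : ∀ x, 0 ≤ f x + g x)
    (u : EuclideanSpace ℝ (Fin n) → ℝ → ℝ)
    (hreg : ContDiffOn ℝ 2 (fun p : EuclideanSpace ℝ (Fin n) × ℝ => u p.1 p.2) (univ ×ˢ Ici 0))
    (hpde : ∀ x, ∀ t > (0 : ℝ),
      deriv (deriv (fun s => u x s)) t - lap (fun z => u z t) x
        + deriv (fun s => u x s) t = 0)
    (hu0 : ∀ x, u x 0 = f x)
    (hu1 : ∀ x, derivWithin (fun s => u x s) (Ici 0) 0 = g x) :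
    ∃ T, max (dsupp (f + g)) (deltaCC (CS (f + g)) (CS f) + dsupp f) ≤ T ∧
      ∀ t ≥ T, {x : EuclideanSpace ℝ (Fin n) | ∀ ξ, u ξ t ≤ u x t} ⊆ CS (f + g) := by
  obtain ⟨T, hT, hsub⟩ := hot_spots_in_convex_hull_general n f g
    (fun k _ => integrable_pow_mul_norm_fourier hf hfc k)
    (fun k _ => integrable_pow_mul_norm_fourier hg hgc k) hfc hgc hne hpos u hreg hpde hu0 hu1
  exact ⟨T, hT, fun t ht => (hsub t ht).trans interior_subset⟩
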